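/- arXiv:1601.07205 — 2 statements merged into one kernel-verified Lean document; each statement's English description precedes it below -/
import Mathlib

section
/- Let p > n ≥ 2, let N be a positive integer, let f : ℝⁿ → ℝᴺ be a continuous map belonging to the Sobolev space W^{1,p}(ℝⁿ;ℝᴺ), and let α ∈ (1, p/(p-(n-1))]. Let L be a one-dimensional linear subspace of ℝⁿ and set β = (n-1) - p(1 - 1/α). Then the set of points a in the orthogonal complement L^⊥ for which the α-dimensional Hausdorff measure of f(a + L) is nonzero has β-dimensional Hausdorff measure zero. -/
open Set MeasureTheory
open scoped ENNReal

namespace BMT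
section morrey
variable {E V : Type*} [NormedAddCommGroup E] [NormedSpace ℝ E] [FiniteDimensional ℝ E]
  [MeasurableSpace E] [BorelSpace E] [NormedAddCommGroup V] [NormedSpace ℝ V] [CompleteSpace V]
  (μ : Measure E) [μ.IsAddHaarMeasure]

lemma seg_bound {F : E → V} (hF : ContDiff ℝ 1 F) (x w : E) :
    edist (F x) (F w) ≤ ∫⁻ t in Ioc (0:ℝ) 1, ‖fderiv ℝ F (x + t • (w - x))‖ₑ * ‖w - x‖ₑ := by
  have hd : ∀ t : ℝ, HasDerivAt (fun t : ℝ => F (x + t • (w - x)))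
      (fderiv ℝ F (x + t • (w - x)) (w - x)) t := by
    intro t
    have h1 : HasDerivAt (fun t : ℝ => x + t • (w - x)) (w - x) t := by
      simpa using ((hasDerivAt_id t).smul_const (w - x)).const_add x
    exact ((hF.differentiable (by simp)) _).hasFDerivAt.comp_hasDerivAt t h1
  have hc : Continuous (fun t : ℝ => fderiv ℝ F (x + t • (w - x)) (w - x)) := by
    have := hF.continuous_fderiv (by simp)
    fun_prop
  have := intervalIntegral.integral_eq_sub_of_hasDerivAt (a := 0) (b := 1) (fun t _ => hd t)
    (hc.intervalIntegrable _ _)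
  simp only [one_smul, zero_smul, add_zero, add_sub_cancel] at this
  rw [edist_comm, edist_eq_enorm_sub, ← this, intervalIntegral.integral_of_le zero_le_one]
  refine (enorm_integral_le_lintegral_enorm _).trans ?_
  exact lintegral_mono fun t => ContinuousLinearMap.le_opENorm _ _

lemma homothety_lintegral {h : E → ℝ≥0∞} (hh : Measurable h) (x : E) {t : ℝ} (ht : 0 < t)
    {B : Set E} (hB : MeasurableSet B) :
    ∃ A : Set E, MeasurableSet A ∧ A = (fun w => x + t • (w - x)) '' B ∧
      μ A = ENNReal.ofReal (t ^ Module.finrank ℝ E) * μ B ∧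
      ∫⁻ w in B, h (x + t • (w - x)) ∂μ =
        ENNReal.ofReal ((t ^ Module.finrank ℝ E)⁻¹) * ∫⁻ w in A, h w ∂μ := by
  set T : E ≃ₜ E := ((Homeomorph.subRight x).trans (Homeomorph.smulOfNeZero t ht.ne')).trans
    (Homeomorph.addLeft x) with hT
  have hTa : ∀ w, T w = x + t • (w - x) := fun w => rfl
  have hmeas : MeasurableEmbedding T := T.measurableEmbedding
  have hmap : Measure.map T μ = ENNReal.ofReal ((t ^ Module.finrank ℝ E)⁻¹) • μ := by
    have e1 : (T : E → E) = (fun y => x + y) ∘ (fun y => t • y) ∘ (fun y => y - x) := by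
      ext w; simp [hTa]
    rw [e1, ← Measure.map_map (by fun_prop) (by fun_prop),
      ← Measure.map_map (by fun_prop) (by fun_prop)]
    have : Measure.map (fun y => y - x) μ = μ := by
      simpa [sub_eq_add_neg] using map_add_right_eq_self μ (-x)
    rw [this, Measure.map_addHaar_smul μ ht.ne', Measure.map_smul, map_add_left_eq_self,
      abs_of_pos (by positivity)]
  refine ⟨T '' B, hmeas.measurableSet_image.2 hB, rfl, ?_, ?_⟩
  · have := Measure.addHaar_image_homothety μ x t B
    rw [abs_of_pos (by positivity)] at this
    rw [← this]
    congr 2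
    ext w; simp [hTa, AffineMap.homothety_apply, add_comm]
  · have h2 : ∫⁻ w in T '' B, h w ∂(Measure.map T μ) = ∫⁻ w in B, h (T w) ∂μ := by
      rw [setLIntegral_map (hmeas.measurableSet_image.2 hB) hh T.continuous.measurable,
        T.injective.preimage_image]
    change _ = ∫⁻ w in B, h (x + t • (w - x)) ∂μ at h2
    rw [← h2, hmap, Measure.restrict_smul, lintegral_smul_measure, smul_eq_mul]

lemma morrey_avg {F : E → V} (hF : ContDiff ℝ 1 F) (z : E) (r : ℝ) (p : ℝ) (hp : 1 ≤ p) (M : ℝ≥0∞)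
    (hM : ∀ A : Set E, MeasurableSet A → A ⊆ Metric.closedBall z r →
      ∫⁻ w in A, ‖fderiv ℝ F w‖ₑ ∂μ ≤ μ A ^ (1 - 1/p) * M) (x : E)
    (hx : x ∈ Metric.closedBall z r) :
    ∫⁻ w in Metric.closedBall z r, edist (F x) (F w) ∂μ ≤
      (2 * ENNReal.ofReal r) * (μ (Metric.closedBall z r) ^ (1 - 1/p) * M *
        ∫⁻ t in Ioc (0:ℝ) 1, ENNReal.ofReal (t ^ (-(Module.finrank ℝ E / p)))) := by
  set B := Metric.closedBall z r with hBdef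
  have hB : MeasurableSet B := Metric.isClosed_closedBall.measurableSet
  have hcd := hF.continuous_fderiv (by simp)
  have hm : Measurable (fun w => ‖fderiv ℝ F w‖ₑ) := hcd.enorm.measurable
  have hp1 : 0 ≤ 1 - 1/p := by
    rw [sub_nonneg, div_le_one (by linarith)]; exact hp
  calc ∫⁻ w in B, edist (F x) (F w) ∂μ
      ≤ ∫⁻ w in B, (∫⁻ t in Ioc (0:ℝ) 1,
          (2 * ENNReal.ofReal r) * ‖fderiv ℝ F (x + t • (w - x))‖ₑ) ∂μ := by
        refine setLIntegral_mono' hB fun w hw => (seg_bound hF x w).trans ?_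
        refine lintegral_mono fun t => ?_
        rw [mul_comm]
        gcongr
        rw [← edist_eq_enorm_sub, edist_dist]
        rw [show (2:ℝ≥0∞) = ENNReal.ofReal 2 by simp, ← ENNReal.ofReal_mul (by norm_num)]
        apply ENNReal.ofReal_le_ofReal
        have := dist_triangle_right w x z
        rw [hBdef, Metric.mem_closedBall] at hw hx
        linarith
    _ = ∫⁻ t in Ioc (0:ℝ) 1, (∫⁻ w in B,
          (2 * ENNReal.ofReal r) * ‖fderiv ℝ F (x + t • (w - x))‖ₑ ∂μ) := by
        apply lintegral_lintegral_swap
        apply Measurable.aemeasurable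
        apply Measurable.const_mul
        apply Continuous.measurable
        apply Continuous.enorm
        apply hcd.comp
        fun_prop
    _ ≤ ∫⁻ t in Ioc (0:ℝ) 1, (2 * ENNReal.ofReal r) * (μ B ^ (1 - 1/p) * M *
          ENNReal.ofReal (t ^ (-(Module.finrank ℝ E / p)))) := by
        refine setLIntegral_mono' measurableSet_Ioc fun t ht => ?_
        rw [lintegral_const_mul _ (by
          apply Continuous.measurable
          apply Continuous.enorm
          apply hcd.comp
          fun_prop)]
        gcongr
        obtain ⟨A, hA, hAe, hAμ, hAi⟩ := homothety_lintegral μ hm x ht.1 hB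
        rw [hAi]
        have hAB : A ⊆ B := by
          rw [hAe]
          rintro _ ⟨w, hw, rfl⟩
          have := (convex_closedBall z r).add_smul_sub_mem hx hw ⟨ht.1.le, ht.2⟩
          exact this
        calc _ ≤ ENNReal.ofReal (t ^ Module.finrank ℝ E)⁻¹ * (μ A ^ (1 - 1/p) * M) := by
              gcongr; exact hM A hA hAB
          _ = _ := by
            rw [hAμ, ENNReal.mul_rpow_of_nonneg _ _ hp1,
              ENNReal.ofReal_rpow_of_nonneg (by have := ht.1; positivity) hp1]
            have : t ^ (-(Module.finrank ℝ E / p)) = (t ^ Module.finrank ℝ E)⁻¹ *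
                (t ^ Module.finrank ℝ E) ^ (1 - 1/p) := by
              rw [← Real.rpow_natCast, ← Real.rpow_neg ht.1.le, ← Real.rpow_mul ht.1.le,
                ← Real.rpow_add ht.1]
              congr 1; ring
            rw [this, ENNReal.ofReal_mul (by have := ht.1; positivity)]
            ring
    _ = _ := by
        rw [lintegral_const_mul _ (by fun_prop), lintegral_const_mul _ (by fun_prop)]

lemma K_lt_top {s : ℝ} (hs : s < 1) : ∫⁻ t in Ioc (0:ℝ) 1, ENNReal.ofReal (t ^ (-s)) < ⊤ := by
  have h := intervalIntegral.intervalIntegrable_rpow' (a := 0) (b := 1) (r := -s) (by linarith)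
  rw [intervalIntegrable_iff_integrableOn_Ioc_of_le zero_le_one] at h
  exact h.lintegral_lt_top

/-- Morrey estimate for `C¹` maps. -/
lemma morrey_C1 (p : ℝ) (hp : 1 ≤ p) (hp' : (Module.finrank ℝ E : ℝ) < p) :
    ∃ C : ℝ≥0∞, C ≠ ⊤ ∧ ∀ (F : E → V) (_ : ContDiff ℝ 1 F) (z : E) (r : ℝ) (_ : 0 < r) (M : ℝ≥0∞)
    (_ : ∀ A : Set E, MeasurableSet A → A ⊆ Metric.closedBall z r →
      ∫⁻ w in A, ‖fderiv ℝ F w‖ₑ ∂μ ≤ μ A ^ (1 - 1/p) * M) (x y : E)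
    (_ : x ∈ Metric.closedBall z r) (_ : y ∈ Metric.closedBall z r),
    edist (F x) (F y) ≤ C * ENNReal.ofReal (r ^ (1 - Module.finrank ℝ E / p)) * M := by
  have hp0 : 0 < p := by linarith
  set K := ∫⁻ t in Ioc (0:ℝ) 1, ENNReal.ofReal (t ^ (-(Module.finrank ℝ E / p))) with hK
  have hKt : K < ⊤ := K_lt_top (by rw [div_lt_one hp0]; exact hp')
  set b := μ (Metric.closedBall (0:E) 1) with hb
  have hb0 : b ≠ 0 := (Metric.measure_closedBall_pos μ 0 one_pos).ne'
  have hbt : b ≠ ⊤ := (isCompact_closedBall (0:E) 1).measure_lt_top.ne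
  refine ⟨4 * b ^ (-(1/p)) * K, ?_, ?_⟩
  · refine ENNReal.mul_ne_top (ENNReal.mul_ne_top (by simp) ?_) hKt.ne
    exact ENNReal.rpow_ne_top_of_ne_zero hb0 hbt
  intro F hF z r hr M hM x y hx hy
  have hBm : μ (Metric.closedBall z r) = ENNReal.ofReal (r ^ Module.finrank ℝ E) * b := by
    rw [Measure.addHaar_closedBall' μ z hr.le]
  set B := Metric.closedBall z r with hBdef
  have hB0 : μ B ≠ 0 := (Metric.measure_closedBall_pos μ z hr).ne'
  have hBt : μ B ≠ ⊤ := (isCompact_closedBall z r).measure_lt_top.ne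
  have h1 := morrey_avg μ hF z r p hp M hM x hx
  have h2 := morrey_avg μ hF z r p hp M hM y hy
  have h3 : edist (F x) (F y) * μ B ≤ 2 * ((2 * ENNReal.ofReal r) * (μ B ^ (1 - 1/p) * M * K)) := by
    calc edist (F x) (F y) * μ B = ∫⁻ w in B, edist (F x) (F y) ∂μ := by simp
      _ ≤ ∫⁻ w in B, (edist (F x) (F w) + edist (F y) (F w)) ∂μ :=
          lintegral_mono fun w => edist_triangle_right _ _ _
      _ = _ := lintegral_add_left (continuous_const.edist hF.continuous).measurable _
      _ ≤ _ := by rw [two_mul]; exact add_le_add h1 h2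
  have h4 : edist (F x) (F y) ≤ 2 * ((2 * ENNReal.ofReal r) * (μ B ^ (1 - 1/p) * M * K)) / μ B :=
    (ENNReal.le_div_iff_mul_le (Or.inl hB0) (Or.inl hBt)).2 h3
  refine h4.trans (le_of_eq ?_)
  have e1 : μ B ^ (1 - 1/p) / μ B = μ B ^ (-(1/p)) := by
    rw [sub_eq_add_neg, ENNReal.rpow_add _ _ hB0 hBt, ENNReal.rpow_one, mul_comm,
      ENNReal.mul_div_cancel_right hB0 hBt]
  have e2 : μ B ^ (-(1/p)) * ENNReal.ofReal r = b ^ (-(1/p)) *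
      ENNReal.ofReal (r ^ (1 - Module.finrank ℝ E / p)) := by
    rw [hBm, ENNReal.mul_rpow_of_ne_top (by simp) hbt,
      ENNReal.ofReal_rpow_of_pos (by positivity)]
    rw [mul_comm (ENNReal.ofReal _), mul_assoc, ← ENNReal.ofReal_mul (by positivity)]
    congr 2
    rw [← Real.rpow_natCast, ← Real.rpow_mul hr.le]
    nth_rw 2 [← Real.rpow_one r]
    rw [← Real.rpow_add hr]
    congr 1; ring
  calc _ = 4 * (μ B ^ (1 - 1/p) / μ B * ENNReal.ofReal r) * M * K := by
        simp only [div_eq_mul_inv]; ring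
    _ = _ := by rw [e1, e2]; ring
end morrey
section moll
variable {n : ℕ} {V : Type*} [NormedAddCommGroup V] [NormedSpace ℝ V] [FiniteDimensional ℝ V]
open scoped Convolution

lemma fderiv_moll {f : EuclideanSpace ℝ (Fin n) → V} (hf : Continuous f)
    {g : EuclideanSpace ℝ (Fin n) → (EuclideanSpace ℝ (Fin n) →L[ℝ] V)}
    (hg : LocallyIntegrable g)
    (hw : ∀ φ : EuclideanSpace ℝ (Fin n) → ℝ, ContDiff ℝ (⊤ : ℕ∞) φ →
      HasCompactSupport φ → ∀ i : Fin n,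
        ∫ x, (fderiv ℝ φ x (EuclideanSpace.single i 1)) • f x =
          - ∫ x, φ x • g x (EuclideanSpace.single i 1))
    {φ : EuclideanSpace ℝ (Fin n) → ℝ} (hφ : ContDiff ℝ (⊤ : ℕ∞) φ) (hφc : HasCompactSupport φ)
    (x : EuclideanSpace ℝ (Fin n)) :
    fderiv ℝ (φ ⋆[ContinuousLinearMap.lsmul ℝ ℝ, volume] f) x = ∫ t, φ (x - t) • g t := by
  have hφ1 : ContDiff ℝ 1 φ := hφ.of_le (by exact_mod_cast le_top)
  have h1 := hφc.hasFDerivAt_convolution_left (ContinuousLinearMap.lsmul ℝ ℝ) (μ := volume)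
    hφ1 hf.locallyIntegrable x
  rw [h1.fderiv]
  have hcs : HasCompactSupport (fun t => φ (x - t)) := by
    exact hφc.comp_homeomorph (Homeomorph.subLeft x)
  have hgi : Integrable (fun t => φ (x - t) • g t) := by
    apply hg.integrable_smul_left_of_hasCompactSupport _ hcs
    exact hφ.continuous.comp (by fun_prop)
  have hdc : Continuous (fderiv ℝ φ) := hφ1.continuous_fderiv (by simp)
  have hint : Integrable (fun t => ((ContinuousLinearMap.lsmul ℝ ℝ).precompL
      (EuclideanSpace ℝ (Fin n)) (fderiv ℝ φ t)) (f (x - t))) := by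
    apply Continuous.integrable_of_hasCompactSupport
    · exact (((ContinuousLinearMap.lsmul ℝ ℝ).precompL
        (EuclideanSpace ℝ (Fin n))).continuous.comp hdc).clm_apply (hf.comp (by fun_prop))
    · refine (hφc.fderiv ℝ).mono fun t ht => ?_
      simp only [Function.mem_support] at ht ⊢
      intro h0
      apply ht
      rw [h0]; simp
  apply ContinuousLinearMap.coe_injective
  apply (EuclideanSpace.basisFun (Fin n) ℝ).toBasis.ext
  intro i
  simp only [OrthonormalBasis.coe_toBasis, EuclideanSpace.basisFun_apply,
    ContinuousLinearMap.coe_coe]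
  rw [ContinuousLinearMap.integral_apply hgi, convolution_def,
    ContinuousLinearMap.integral_apply hint]
  simp only [ContinuousLinearMap.precompL_apply, ContinuousLinearMap.lsmul_apply]
  have hψ : ContDiff ℝ (⊤ : ℕ∞) (fun t => φ (x - t)) := hφ.comp (by fun_prop)
  have h2 := hw _ hψ hcs i
  have h3 : ∀ t, fderiv ℝ (fun t => φ (x - t)) t (EuclideanSpace.single i 1) =
      - fderiv ℝ φ (x - t) (EuclideanSpace.single i 1) := by
    intro t
    have : HasFDerivAt (fun t => φ (x - t)) ((fderiv ℝ φ (x - t)).comp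
        (-ContinuousLinearMap.id ℝ _)) t := by
      apply HasFDerivAt.comp t ((hφ1.differentiable (by simp)) _).hasFDerivAt
      exact (hasFDerivAt_id t).const_sub x
    rw [this.fderiv]; simp
  simp only [h3, neg_smul, integral_neg, neg_inj] at h2
  simp only [ContinuousLinearMap.smul_apply]
  rw [← h2, ← integral_sub_left_eq_self _ volume x]
  simp

lemma moll_hyp {p : ℝ} (hp : 1 < p) {f : EuclideanSpace ℝ (Fin n) → V} (hf : Continuous f)
    {g : EuclideanSpace ℝ (Fin n) → (EuclideanSpace ℝ (Fin n) →L[ℝ] V)}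
    (hgm : Measurable fun x => ‖g x‖ₑ)
    (hg : LocallyIntegrable g)
    (hw : ∀ φ : EuclideanSpace ℝ (Fin n) → ℝ, ContDiff ℝ (⊤ : ℕ∞) φ →
      HasCompactSupport φ → ∀ i : Fin n,
        ∫ x, (fderiv ℝ φ x (EuclideanSpace.single i 1)) • f x =
          - ∫ x, φ x • g x (EuclideanSpace.single i 1))
    (φ : ContDiffBump (0 : EuclideanSpace ℝ (Fin n))) (z : EuclideanSpace ℝ (Fin n)) (r : ℝ)
    (A : Set (EuclideanSpace ℝ (Fin n))) (hA : MeasurableSet A) (hAs : A ⊆ Metric.closedBall z r) :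
    ∫⁻ w in A, ‖fderiv ℝ (φ.normed volume ⋆[ContinuousLinearMap.lsmul ℝ ℝ, volume] f) w‖ₑ ≤
      volume A ^ (1 - 1/p) * 
        ((volume.withDensity fun x => ‖g x‖ₑ ^ p) (Metric.cthickening φ.rOut (Metric.closedBall z r)))
          ^ (1/p) := by
  set B' := Metric.cthickening φ.rOut (Metric.closedBall z r) with hB'
  have hB'm : MeasurableSet B' := Metric.isClosed_cthickening.measurableSet
  have hφm : Measurable (fun s => ‖φ.normed volume s‖ₑ) := φ.continuous_normed.enorm.measurable
  have hφ1 : ∫⁻ s, ‖φ.normed volume s‖ₑ = 1 := by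
    rw [← ofReal_integral_norm_eq_lintegral_enorm φ.integrable_normed]
    simp only [Real.norm_eq_abs, abs_of_nonneg (φ.nonneg_normed _), φ.integral_normed,
      ENNReal.ofReal_one]
  have hsub : Measurable (fun q : EuclideanSpace ℝ (Fin n) × EuclideanSpace ℝ (Fin n) =>
      ‖g (q.1 - q.2)‖ₑ) := hgm.comp (measurable_fst.sub measurable_snd)
  have hsub1 : ∀ s, Measurable (fun w => ‖g (w - s)‖ₑ) := fun s =>
    hgm.comp (measurable_id.sub_const s)
  calc _ ≤ ∫⁻ w in A, (∫⁻ s, ‖φ.normed volume s‖ₑ * ‖g (w - s)‖ₑ) := by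
        refine lintegral_mono fun w => ?_
        rw [fderiv_moll hf hg hw φ.contDiff_normed φ.hasCompactSupport_normed]
        refine (enorm_integral_le_lintegral_enorm _).trans (le_of_eq ?_)
        rw [← lintegral_sub_left_eq_self _ w]
        simp [enorm_smul]
    _ = ∫⁻ s, (∫⁻ w in A, ‖φ.normed volume s‖ₑ * ‖g (w - s)‖ₑ) := by
        apply lintegral_lintegral_swap
        exact ((hφm.comp measurable_snd).mul hsub).aemeasurable
    _ ≤ ∫⁻ s, ‖φ.normed volume s‖ₑ * (volume A ^ (1 - 1/p) *
        ((volume.withDensity fun x => ‖g x‖ₑ ^ p) B') ^ (1/p)) := by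
        refine lintegral_mono fun s => ?_
        rw [lintegral_const_mul _ (hsub1 s)]
        by_cases hs : φ.normed volume s = 0
        · simp [hs]
        have hs' : s ∈ Metric.ball 0 φ.rOut := by
          rw [← φ.support_normed_eq (μ := volume)]; exact hs
        gcongr
        have hq : p.HolderConjugate (p / (p - 1)) := Real.HolderConjugate.conjExponent hp
        have hH := ENNReal.lintegral_mul_le_Lp_mul_Lq (volume.restrict A) hq (f := fun w => ‖g (w - s)‖ₑ)
          (g := fun _ => 1) (hsub1 s).aemeasurable measurable_const.aemeasurable
        simp only [Pi.mul_apply, mul_one, ENNReal.one_rpow, lintegral_const, one_mul,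
          Measure.restrict_apply MeasurableSet.univ, univ_inter] at hH
        have e : 1 / (p / (p - 1)) = 1 - 1 / p := by
          have : p - 1 ≠ 0 := by linarith
          have : p ≠ 0 := by linarith
          field_simp
        rw [e, mul_comm] at hH
        refine hH.trans ?_
        gcongr
        rw [withDensity_apply _ hB'm]
        calc ∫⁻ w in A, ‖g (w - s)‖ₑ ^ p = ∫⁻ w, A.indicator (fun w => ‖g (w - s)‖ₑ ^ p) w := by
              rw [lintegral_indicator hA]
          _ ≤ ∫⁻ w, B'.indicator (fun w => ‖g w‖ₑ ^ p) (w - s) := by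
              refine lintegral_mono fun w => ?_
              by_cases hwA : w ∈ A
              · have : w - s ∈ B' := by
                  apply Metric.mem_cthickening_of_dist_le _ w _ _ (hAs hwA)
                  simp only [mem_ball_zero_iff] at hs'
                  simpa using hs'.le
                simp [hwA, this]
              · simp [hwA]
          _ = ∫⁻ w, B'.indicator (fun w => ‖g w‖ₑ ^ p) w := lintegral_sub_right_eq_self _ s
          _ = _ := by rw [lintegral_indicator hB'm]
    _ = _ := by
        rw [lintegral_mul_const _ hφm, hφ1, one_mul]

/-- Morrey estimate for continuous Sobolev maps. -/
lemma morrey_sobolev (n : ℕ) (p : ℝ) (hp : 1 < p) (hp' : (n : ℝ) < p) 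
    (f : EuclideanSpace ℝ (Fin n) → V) (hf : Continuous f)
    (g : EuclideanSpace ℝ (Fin n) → (EuclideanSpace ℝ (Fin n) →L[ℝ] V))
    (hgm : Measurable fun x => ‖g x‖ₑ)
    (hg : LocallyIntegrable g)
    (hgf : ∫⁻ x, ‖g x‖ₑ ^ p ≠ ⊤)
    (hw : ∀ φ : EuclideanSpace ℝ (Fin n) → ℝ, ContDiff ℝ (⊤ : ℕ∞) φ →
      HasCompactSupport φ → ∀ i : Fin n,
        ∫ x, (fderiv ℝ φ x (EuclideanSpace.single i 1)) • f x =
          - ∫ x, φ x • g x (EuclideanSpace.single i 1)) :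
    ∃ C : ℝ≥0∞, C ≠ ⊤ ∧ ∀ (z : EuclideanSpace ℝ (Fin n)) (r : ℝ) (_ : 0 < r)
      (x y : EuclideanSpace ℝ (Fin n))
      (_ : x ∈ Metric.closedBall z r) (_ : y ∈ Metric.closedBall z r),
    edist (f x) (f y) ≤ C * ENNReal.ofReal (r ^ (1 - n / p)) *
      ((volume.withDensity fun x => ‖g x‖ₑ ^ p) (Metric.closedBall z r)) ^ (1/p) := by
  obtain ⟨C, hC, H⟩ := morrey_C1 (E := EuclideanSpace ℝ (Fin n)) (V := V) volume p hp.le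
    (by simpa using hp')
  have : CompleteSpace V := FiniteDimensional.complete ℝ V
  refine ⟨C, hC, fun z r hr x y hx hy => ?_⟩
  set ν := volume.withDensity fun x => ‖g x‖ₑ ^ p with hν
  have : IsFiniteMeasure ν := isFiniteMeasure_withDensity hgf
  let φ : ℕ → ContDiffBump (0 : EuclideanSpace ℝ (Fin n)) := fun k =>
    ⟨1 / ((k:ℝ) + 1) / 2, 1 / ((k:ℝ) + 1), by positivity, half_lt_self (by positivity)⟩
  have hφr : Filter.Tendsto (fun k => (φ k).rOut) Filter.atTop (nhds 0) :=
    tendsto_one_div_add_atTop_nhds_zero_nat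
  have hlx := ContDiffBump.convolution_tendsto_right_of_continuous (μ := volume) hφr hf x
  have hly := ContDiffBump.convolution_tendsto_right_of_continuous (μ := volume) hφr hf y
  have hl := hlx.edist hly
  have hth : Filter.Tendsto (fun k => ν (Metric.cthickening (φ k).rOut (Metric.closedBall z r)))
      Filter.atTop (nhds (ν (Metric.closedBall z r))) :=
    (tendsto_measure_cthickening_of_isClosed ⟨1, one_pos, measure_ne_top _ _⟩
      Metric.isClosed_closedBall).comp hφr
  have hr' : Filter.Tendsto (fun k => C * ENNReal.ofReal (r ^ (1 - n / p)) *
      ν (Metric.cthickening (φ k).rOut (Metric.closedBall z r)) ^ (1/p)) Filter.atTop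
      (nhds (C * ENNReal.ofReal (r ^ (1 - n / p)) * ν (Metric.closedBall z r) ^ (1/p))) := by
    apply ENNReal.Tendsto.const_mul
    · exact (ENNReal.continuous_rpow_const.tendsto _).comp hth
    · right; exact ENNReal.mul_ne_top hC (by simp)
  refine le_of_tendsto_of_tendsto' hl hr' fun k => ?_
  have := H ((φ k).normed volume ⋆[ContinuousLinearMap.lsmul ℝ ℝ, volume] f) ?_ z r hr
    (ν (Metric.cthickening (φ k).rOut (Metric.closedBall z r)) ^ (1/p)) ?_ x y hx hy
  · simpa using this
  · exact (φ k).hasCompactSupport_normed.contDiff_convolution_left _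
      (φ k).contDiff_normed hf.locallyIntegrable
  · intro A hA hAs
    exact moll_hyp hp hf hgm hg hw (φ k) z r A hA hAs
end moll
section cover
variable {X : Type*} [MetricSpace X] [SecondCountableTopology X] [MeasurableSpace X] [BorelSpace X]

lemma vitali_aux (ν : Measure X) {β c : ℝ} (hc : 0 < c) (r : ℕ → ℝ)
    (hr : ∀ j, 0 < r j) (hr0 : Filter.Tendsto r Filter.atTop (nhds 0)) (A U : Set X)
    (hU : IsOpen U) (hAU : A ⊆ U)
    (hA : ∀ a ∈ A, ∀ᶠ j in Filter.atTop, ENNReal.ofReal (c * r j ^ β) ≤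
      ν (Metric.closedBall a (r j))) (δ : ℝ) (hδ : 0 < δ) :
    ∃ (u : Set X) (ρ : X → ℝ), u.Countable ∧ (∀ a ∈ u, 0 < ρ a ∧ ρ a ≤ δ) ∧
      A ⊆ ⋃ a : u, Metric.closedBall (a : X) (5 * ρ a) ∧
      ∑' a : u, ENNReal.ofReal (ρ a ^ β) ≤ ENNReal.ofReal (1 / c) * ν U := by
  have hex : ∀ a : X, ∃ ρ : ℝ, a ∈ A → 0 < ρ ∧ ρ ≤ δ ∧ Metric.closedBall a ρ ⊆ U ∧
      ENNReal.ofReal (c * ρ ^ β) ≤ ν (Metric.closedBall a ρ) := by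
    intro a
    by_cases ha : a ∈ A
    · obtain ⟨ε, hε, hεU⟩ := Metric.nhds_basis_closedBall.mem_iff.1 (hU.mem_nhds (hAU ha))
      have h1 : ∀ᶠ j in Filter.atTop, r j < min ε δ :=
        hr0.eventually_lt_const (lt_min hε hδ)
      obtain ⟨j, hj1, hj2⟩ := (h1.and (hA a ha)).exists
      refine ⟨r j, fun _ => ⟨hr j, (hj1.trans_le (min_le_right _ _)).le, ?_, hj2⟩⟩
      exact (Metric.closedBall_subset_closedBall (hj1.trans_le (min_le_left _ _)).le).trans hεU
    · exact ⟨0, fun h => absurd h ha⟩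
  choose ρ hρ using hex
  obtain ⟨u, huA, hdisj, hcov⟩ := Vitali.exists_disjoint_subfamily_covering_enlargement_closedBall A
    (fun a => a) ρ δ (fun a ha => (hρ a ha).2.1) 5 (by norm_num)
  have hcount : u.Countable := by
    apply hdisj.countable_of_nonempty_interior
    intro a ha
    exact ⟨a, Metric.ball_subset_interior_closedBall (Metric.mem_ball_self (hρ a (huA ha)).1)⟩
  refine ⟨u, ρ, hcount, fun a ha => ⟨(hρ a (huA ha)).1, (hρ a (huA ha)).2.1⟩, ?_, ?_⟩
  · intro a ha
    obtain ⟨b, hb, hab⟩ := hcov a ha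
    exact mem_iUnion.2 ⟨⟨b, hb⟩, hab (Metric.mem_closedBall_self (hρ a ha).1.le)⟩
  · have : Countable u := hcount
    calc ∑' a : u, ENNReal.ofReal (ρ a ^ β)
        ≤ ∑' a : u, ENNReal.ofReal (1 / c) * ν (Metric.closedBall (a : X) (ρ a)) := by
          refine ENNReal.tsum_le_tsum fun a => ?_
          have h := (hρ a (huA a.2)).2.2.2
          calc ENNReal.ofReal (ρ a ^ β) = ENNReal.ofReal (1 / c) * ENNReal.ofReal (c * ρ a ^ β) := by
                rw [← ENNReal.ofReal_mul (by positivity)]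
                congr 1; field_simp
            _ ≤ _ := by gcongr
      _ = ENNReal.ofReal (1 / c) * ∑' a : u, ν (Metric.closedBall (a : X) (ρ a)) :=
          ENNReal.tsum_mul_left
      _ = ENNReal.ofReal (1 / c) * ν (⋃ a : u, Metric.closedBall (a : X) (ρ a)) := by
          rw [measure_iUnion]
          · intro a b hab
            exact hdisj a.2 b.2 (fun h => hab (Subtype.ext h))
          · intro a; exact Metric.isClosed_closedBall.measurableSet
      _ ≤ _ := by
          gcongr
          exact iUnion_subset fun a => (hρ a (huA a.2)).2.2.1

lemma vitali_bound (ν : Measure X) {β c : ℝ} (hβ : 0 ≤ β) (hc : 0 < c) (r : ℕ → ℝ)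
    (hr : ∀ j, 0 < r j) (hr0 : Filter.Tendsto r Filter.atTop (nhds 0)) (A U : Set X)
    (hU : IsOpen U) (hAU : A ⊆ U)
    (hA : ∀ a ∈ A, ∀ᶠ j in Filter.atTop, ENNReal.ofReal (c * r j ^ β) ≤
      ν (Metric.closedBall a (r j))) :
    μH[β] A ≤ ENNReal.ofReal (10 ^ β) * (ENNReal.ofReal (1 / c) * ν U) := by
  have := fun k : ℕ => vitali_aux ν hc r hr hr0 A U hU hAU hA (1 / ((k:ℝ) + 1)) (by positivity)
  choose u ρ hcount hρ hcov hsum using this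
  have : ∀ k, Countable (u k) := hcount
  have hdiam : ∀ k (a : u k), Metric.ediam (Metric.closedBall (a : X) (5 * ρ k a)) ≤
      ENNReal.ofReal (10 * ρ k a) := by
    intro k a
    rw [show 10 * ρ k a = 2 * (5 * ρ k a) by ring, ENNReal.ofReal_mul (by norm_num),
      ENNReal.ofReal_ofNat, ← Metric.closedEBall_ofReal (by have := (hρ k a a.2).1; positivity)]
    exact Metric.ediam_closedEBall_le
  refine (Measure.hausdorffMeasure_le_liminf_tsum (ι := fun k => u k) (l := Filter.atTop) β A
    (fun k : ℕ => ENNReal.ofReal (10 * (1 / ((k:ℝ) + 1)))) ?_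
    (fun k a => Metric.closedBall (a : X) (5 * ρ k a)) ?_ ?_).trans ?_
  · rw [← ENNReal.ofReal_zero]
    apply ENNReal.tendsto_ofReal
    simpa using (tendsto_one_div_add_atTop_nhds_zero_nat (𝕜 := ℝ)).const_mul 10
  · refine Filter.Eventually.of_forall fun k a => (hdiam k a).trans ?_
    apply ENNReal.ofReal_le_ofReal
    have := (hρ k a a.2).2
    linarith
  · exact Filter.Eventually.of_forall hcov
  · apply Filter.liminf_le_of_frequently_le'
    refine Filter.Eventually.frequently (Filter.Eventually.of_forall fun k => ?_)
    calc _ ≤ ∑' a : u k, ENNReal.ofReal (10 ^ β) * ENNReal.ofReal (ρ k a ^ β) := by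
          refine ENNReal.tsum_le_tsum fun a => ?_
          have h0 := (hρ k a a.2).1
          calc _ ≤ (ENNReal.ofReal (10 * ρ k a)) ^ β := by
                gcongr
                exact hdiam k a
            _ = _ := by
                rw [ENNReal.ofReal_rpow_of_nonneg (by positivity) hβ,
                  Real.mul_rpow (by norm_num) h0.le, ENNReal.ofReal_mul (by positivity)]
      _ = _ := ENNReal.tsum_mul_left
      _ ≤ _ := by gcongr; exact hsum k

/-- Density argument. -/
lemma density_null (ν : Measure X) [IsFiniteMeasure ν] {β c : ℝ} (hβ : 0 ≤ β) (hc : 0 < c)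
    (r : ℕ → ℝ)
    (hr : ∀ j, 0 < r j) (hr0 : Filter.Tendsto r Filter.atTop (nhds 0)) (A : Set X)
    (hA : ∀ a ∈ A, ∀ᶠ j in Filter.atTop, ENNReal.ofReal (c * r j ^ β) ≤
      ν (Metric.closedBall a (r j))) (hnull : μH[β] A ≠ ⊤ → ν A = 0) :
    μH[β] A = 0 := by
  have h1 := vitali_bound ν hβ hc r hr hr0 A univ isOpen_univ (subset_univ _) hA
  have h2 : ν A = 0 := by
    apply hnull
    refine ne_top_of_le_ne_top ?_ h1
    exact ENNReal.mul_ne_top (by simp) (ENNReal.mul_ne_top (by simp) (measure_ne_top _ _))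
  have h3 : ∀ U, A ⊆ U → IsOpen U → μH[β] A ≤
      ENNReal.ofReal (10 ^ β) * (ENNReal.ofReal (1 / c) * ν U) := fun U hAU hU =>
    vitali_bound ν hβ hc r hr hr0 A U hU hAU hA
  have h4 : ∀ k : ℕ, μH[β] A ≤ ENNReal.ofReal (10 ^ β) *
      (ENNReal.ofReal (1 / c) * ((k : ℝ≥0∞) + 1)⁻¹) := by
    intro k
    obtain ⟨U, hAU, hU, hνU⟩ := A.exists_isOpen_lt_of_lt (μ := ν) ((k : ℝ≥0∞) + 1)⁻¹
      (by rw [h2]; simp)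
    refine (h3 U hAU hU).trans ?_
    gcongr
  have h5 : Filter.Tendsto (fun k : ℕ => ENNReal.ofReal (10 ^ β) *
      (ENNReal.ofReal (1 / c) * ((k : ℝ≥0∞) + 1)⁻¹)) Filter.atTop (nhds 0) := by
    have h6 : Filter.Tendsto (fun k : ℕ => ((k : ℝ≥0∞) + 1)⁻¹) Filter.atTop (nhds 0) := by
      have := (Filter.tendsto_add_atTop_iff_nat 1).2 ENNReal.tendsto_inv_nat_nhds_zero
      simpa using this
    have := ENNReal.Tendsto.const_mul (a := ENNReal.ofReal (10 ^ β))
      (ENNReal.Tendsto.const_mul (a := ENNReal.ofReal (1 / c)) h6 (Or.inr (by simp)))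
      (Or.inr (by simp))
    simpa using this
  exact le_antisymm (ge_of_tendsto' h5 h4) zero_le
end cover

lemma proj_null {n : ℕ} (L : Submodule ℝ (EuclideanSpace ℝ (Fin n)))
    (hL : Module.finrank ℝ L = 1)
    (A : Set (EuclideanSpace ℝ (Fin n))) (h0 : μH[(n : ℝ) - 1] A = 0) :
    volume ((Lᗮ.starProjection : EuclideanSpace ℝ (Fin n) → EuclideanSpace ℝ (Fin n)) ⁻¹' A) = 0 := by
  have hfin := L.finrank_add_finrank_orthogonal
  rw [hL, finrank_euclideanSpace, Fintype.card_fin] at hfin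
  set m := Module.finrank ℝ Lᗮ with hm
  have hnm : (n : ℝ) - 1 = m := by rw [← hfin]; push_cast; ring
  rw [hnm] at h0
  set A0 : Set Lᗮ := (fun y : Lᗮ => (y : EuclideanSpace ℝ (Fin n))) ⁻¹' A with hA0
  have h1 : μH[(m:ℝ)] A0 = 0 := by
    have hi : Isometry (fun y : Lᗮ => (y : EuclideanSpace ℝ (Fin n))) := isometry_subtype_coe
    have := hi.hausdorffMeasure_preimage (d := (m:ℝ)) (Or.inl (by positivity)) A
    rw [hA0, this]
    exact measure_mono_null inter_subset_left h0
  let e : Lᗮ ≃L[ℝ] (Fin m → ℝ) := ContinuousLinearEquiv.ofFinrankEq (by simp [hm])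
  have h2 : volume (e '' A0) = 0 := by
    have := e.lipschitz.hausdorffMeasure_image_le (d := (m:ℝ)) (by positivity) A0
    rw [h1, mul_zero] at this
    have h3 : (μH[(m:ℝ)] : Measure (Fin m → ℝ)) = volume := by
      simpa using hausdorffMeasure_pi_real (ι := Fin m)
    rw [← h3]
    exact le_antisymm this zero_le
  let S : EuclideanSpace ℝ (Fin n) →ₗ[ℝ] (Fin m → ℝ) :=
    (e : Lᗮ →ₗ[ℝ] (Fin m → ℝ)) ∘ₗ (Lᗮ.orthogonalProjectionOnto : _ →ₗ[ℝ] Lᗮ)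
  have hS : Function.Surjective S := by
    apply e.surjective.comp
    intro y
    exact ⟨y, Lᗮ.orthogonalProjectionOnto_mem_subspace_eq_self y⟩
  obtain ⟨c, -, hc⟩ := S.exists_map_addHaar_eq_smul_addHaar volume volume hS
  have hq : volume (S ⁻¹' (e '' A0)) = 0 := by
    have hcm : Measure.map S volume (e '' A0) = 0 := by rw [hc]; simp [h2]
    exact Measure.preimage_null_of_map_null S.continuous_of_finiteDimensional.aemeasurable hcm
  refine measure_mono_null ?_ hq
  intro x hx
  refine ⟨Lᗮ.orthogonalProjectionOnto x, ?_, rfl⟩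
  exact hx
section lines

lemma sum_rpow_le {ι : Type*} [Fintype ι] (b : ι → ℝ≥0∞) {s : ℝ} (hs : 0 < s) (hs1 : s ≤ 1) :
    ∑ k, b k ^ s ≤ (Fintype.card ι : ℝ≥0∞) ^ (1 - s) * (∑ k, b k) ^ s := by
  have h := ENNReal.inner_le_weight_mul_Lp_of_nonneg Finset.univ (p := s⁻¹)
    ((one_le_inv₀ hs).2 hs1) (fun _ : ι => 1) (fun k => b k ^ s)
  simp only [one_mul, inv_inv, Finset.sum_const, Finset.card_univ, nsmul_eq_mul, mul_one,
    ← ENNReal.rpow_mul, mul_inv_cancel₀ hs.ne', ENNReal.rpow_one] at h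
  exact h

lemma cover_unit {t m : ℝ} (ht : t ∈ Icc m (m + 1)) (j : ℕ) :
    ∃ k : Fin (j + 1), |t - (m + (2 * (k : ℝ) + 1) * (1 / (2 * ((j:ℝ) + 1))))| ≤
      1 / (2 * ((j:ℝ) + 1)) := by
  have hj : (0:ℝ) < (j:ℝ) + 1 := by positivity
  obtain ⟨h1, h2⟩ := ht
  have key : ∀ k : ℝ, k ≤ (t - m) * (j + 1) → (t - m) * (j + 1) ≤ k + 1 →
      |t - (m + (2 * k + 1) * (1 / (2 * ((j:ℝ) + 1))))| ≤ 1 / (2 * ((j:ℝ) + 1)) := by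
    intro k hk1 hk2
    have e : t - (m + (2 * k + 1) * (1 / (2 * ((j:ℝ) + 1)))) =
        (2 * ((t - m) * (j + 1) - k) - 1) * (1 / (2 * ((j:ℝ) + 1))) := by
      field_simp; ring
    rw [e, abs_mul, abs_of_pos (a := 1 / (2 * ((j:ℝ) + 1))) (by positivity)]
    apply mul_le_of_le_one_left (by positivity)
    rw [abs_le]; constructor <;> linarith
  have h0 : 0 ≤ (t - m) * (j + 1) := mul_nonneg (by linarith) hj.le
  by_cases hlast : (j : ℝ) ≤ (t - m) * (j + 1)
  · refine ⟨Fin.last j, key _ (by simpa using hlast) ?_⟩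
    simp only [Fin.val_last]
    nlinarith
  · push Not at hlast
    have hfl : ⌊(t - m) * (j + 1)⌋₊ < j + 1 := by
      rw [Nat.floor_lt h0]; push_cast; linarith
    refine ⟨⟨_, hfl⟩, key _ (Nat.floor_le h0) (Nat.lt_floor_add_one _).le⟩

variable {n : ℕ} {V : Type*} [NormedAddCommGroup V] [NormedSpace ℝ V] [FiniteDimensional ℝ V]
  [MeasurableSpace V] [BorelSpace V]

lemma balls_sum (G : Measure (EuclideanSpace ℝ (Fin n))) (hG : G ≪ volume)
    (L : Submodule ℝ (EuclideanSpace ℝ (Fin n))) (u : EuclideanSpace ℝ (Fin n)) (huL : u ∈ L)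
    (hu : ‖u‖ = 1) (a : EuclideanSpace ℝ (Fin n)) (ha : a ∈ Lᗮ) (m r : ℝ) (hr : 0 < r) (N : ℕ) :
    ∑ k : Fin N, G (Metric.closedBall (a + (m + (2 * ((k : ℕ) : ℝ) + 1) * r) • u) r) ≤
      (G.map (Lᗮ.starProjection : EuclideanSpace ℝ (Fin n) → EuclideanSpace ℝ (Fin n)))
        (Metric.closedBall a r) := by
  have hball : ∀ z, G (Metric.closedBall z r) = G (Metric.ball z r) := by
    intro z
    rw [← Metric.ball_union_sphere]
    refine le_antisymm ((measure_union_le _ _).trans ?_) (measure_mono subset_union_left)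
    rw [hG (Measure.addHaar_sphere_of_ne_zero volume z hr.ne'), add_zero]
  simp only [hball]
  rw [Measure.map_apply (by fun_prop) Metric.isClosed_closedBall.measurableSet,
    ← tsum_fintype (L := SummationFilter.unconditional _), ← measure_iUnion]
  · apply measure_mono
    apply iUnion_subset
    intro k x hx
    rw [mem_preimage, Metric.mem_closedBall]
    have hpa : Lᗮ.starProjection (a + (m + (2 * ((k : ℕ) : ℝ) + 1) * r) • u) = a := by
      rw [map_add, map_smul, Submodule.starProjection_eq_self_iff.2 ha,
        (Submodule.starProjection_apply_eq_zero_iff _).2 (L.le_orthogonal_orthogonal huL)]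
      simp
    rw [← hpa, dist_eq_norm, ← map_sub]
    refine (Lᗮ.norm_starProjection_apply_le _).trans ?_
    rw [← dist_eq_norm]
    exact (Metric.mem_ball.1 hx).le
  · intro k l hkl
    apply Metric.ball_disjoint_ball
    rw [dist_eq_norm, add_sub_add_left_eq_sub, ← sub_smul, norm_smul, hu, mul_one, Real.norm_eq_abs]
    have e : (m + (2 * ((k : ℕ) : ℝ) + 1) * r) - (m + (2 * ((l : ℕ) : ℝ) + 1) * r) =
        ((((k : ℕ) : ℤ) - ((l : ℕ) : ℤ) : ℤ) : ℝ) * (2 * r) := by push_cast; ring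
    rw [e, abs_mul, abs_of_pos (a := 2 * r) (by positivity), ← two_mul]
    apply le_mul_of_one_le_left (by positivity)
    have : (((k : ℕ) : ℤ) - ((l : ℕ) : ℤ) : ℤ) ≠ 0 := by
      intro h; apply hkl; ext; omega
    exact_mod_cast Int.one_le_abs this
  · intro k; exact Metric.isOpen_ball.measurableSet

lemma segment_null {p α β : ℝ} (hn : (n : ℝ) < p) (hp : 0 < p) (hα : 0 < α) (hαp : α ≤ p)
    (hβ : β = ((n : ℝ) - 1) - p * (1 - 1 / α))
    (f : EuclideanSpace ℝ (Fin n) → V)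
    (G : Measure (EuclideanSpace ℝ (Fin n))) [IsFiniteMeasure G] (hG : G ≪ volume)
    (C : ℝ≥0∞) (hC : C ≠ ⊤)
    (H : ∀ (z : EuclideanSpace ℝ (Fin n)) (r : ℝ) (_ : 0 < r)
      (x y : EuclideanSpace ℝ (Fin n))
      (_ : x ∈ Metric.closedBall z r) (_ : y ∈ Metric.closedBall z r),
      edist (f x) (f y) ≤ C * ENNReal.ofReal (r ^ (1 - n / p)) *
      (G (Metric.closedBall z r)) ^ (1/p))
    (L : Submodule ℝ (EuclideanSpace ℝ (Fin n))) (u : EuclideanSpace ℝ (Fin n)) (huL : u ∈ L)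
    (hu : ‖u‖ = 1) (a : EuclideanSpace ℝ (Fin n)) (ha : a ∈ Lᗮ) (m : ℝ)
    (hbad : ∀ i : ℕ, ∃ᶠ j : ℕ in Filter.atTop,
      (G.map (Lᗮ.starProjection : EuclideanSpace ℝ (Fin n) → EuclideanSpace ℝ (Fin n)))
        (Metric.closedBall a (1 / (2 * ((j:ℝ) + 1)))) ≤
          ENNReal.ofReal ((1 / ((i:ℝ) + 1)) * (1 / (2 * ((j:ℝ) + 1))) ^ β)) :
    μH[α] (f '' {x | ∃ t ∈ Icc m (m + 1), x = a + t • u}) = 0 := by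
  set ν := G.map (Lᗮ.starProjection : EuclideanSpace ℝ (Fin n) → EuclideanSpace ℝ (Fin n)) with hν
  set r : ℕ → ℝ := fun j => 1 / (2 * ((j:ℝ) + 1)) with hrdef
  have hr : ∀ j, 0 < r j := fun j => by simp only [hrdef]; positivity
  have hr0 : Filter.Tendsto r Filter.atTop (nhds 0) := by
    have := (tendsto_one_div_add_atTop_nhds_zero_nat (𝕜 := ℝ)).const_mul (1/2)
    rw [mul_zero] at this
    refine this.congr fun j => ?_
    simp only [hrdef]; field_simp
  set s := α / p with hs
  have hs0 : 0 < s := by positivity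
  have hs1 : s ≤ 1 := (div_le_one hp).2 hαp
  set B : (j : ℕ) → Fin (j + 1) → Set (EuclideanSpace ℝ (Fin n)) := fun j k =>
    Metric.closedBall (a + (m + (2 * ((k : ℕ) : ℝ) + 1) * r j) • u) (r j) with hB
  have hdiam : ∀ j k, Metric.ediam (f '' B j k) ≤
      C * ENNReal.ofReal (r j ^ (1 - n / p)) * (G (B j k)) ^ (1/p) := by
    intro j k
    apply Metric.ediam_le
    rintro _ ⟨x, hx, rfl⟩ _ ⟨y, hy, rfl⟩
    exact H _ _ (hr j) x y hx hy
  have hexp : 0 < 1 - n / p := by rw [sub_pos, div_lt_one hp]; exact hn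
  have hH := Measure.hausdorffMeasure_le_liminf_sum (ι := fun j => Fin (j + 1)) (l := Filter.atTop) α
    (f '' {x | ∃ t ∈ Icc m (m + 1), x = a + t • u})
    (fun j => C * ENNReal.ofReal (r j ^ (1 - n / p)) * (G univ) ^ (1/p)) ?_
    (fun j k => f '' B j k) ?_ ?_
  rotate_left
  · have h1 : Filter.Tendsto (fun j => ENNReal.ofReal (r j ^ (1 - n / p))) Filter.atTop (nhds 0) := by
      rw [← ENNReal.ofReal_zero]
      apply ENNReal.tendsto_ofReal
      have := hr0.rpow_const (p := 1 - n / p) (Or.inr hexp.le)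
      rwa [Real.zero_rpow hexp.ne'] at this
    have h2 := ENNReal.Tendsto.mul_const (b := G univ ^ (1/p))
      (ENNReal.Tendsto.const_mul (a := C) h1 (Or.inr hC))
      (Or.inr (ENNReal.rpow_ne_top_of_nonneg (by positivity) (measure_ne_top _ _)))
    simpa using h2
  · refine Filter.Eventually.of_forall fun j k => (hdiam j k).trans ?_
    gcongr
    exact subset_univ _
  · refine Filter.Eventually.of_forall fun j => ?_
    rintro _ ⟨x, ⟨t, ht, rfl⟩, rfl⟩
    obtain ⟨k, hk⟩ := cover_unit ht j
    refine mem_iUnion.2 ⟨k, mem_image_of_mem f ?_⟩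
    simp only [hB]
    rw [Metric.mem_closedBall, dist_eq_norm, add_sub_add_left_eq_sub, ← sub_smul, norm_smul, hu,
      mul_one, Real.norm_eq_abs]
    exact hk
  have hsum : ∀ j, ∑ k, Metric.ediam (f '' B j k) ^ α ≤
      C ^ α * (ENNReal.ofReal (r j ^ (-β)) * ν (Metric.closedBall a (r j))) ^ s := by
    intro j
    have hcard : ((j + 1 : ℕ) : ℝ≥0∞) ≤ ENNReal.ofReal ((r j)⁻¹) := by
      rw [← ENNReal.ofReal_natCast]
      apply ENNReal.ofReal_le_ofReal
      simp only [hrdef]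
      rw [one_div, inv_inv]; push_cast; linarith [(Nat.cast_nonneg j : (0:ℝ) ≤ j)]
    calc ∑ k, Metric.ediam (f '' B j k) ^ α
        ≤ ∑ k, C ^ α * ENNReal.ofReal (r j ^ (α * (1 - n / p))) * (G (B j k)) ^ s := by
          refine Finset.sum_le_sum fun k _ => ?_
          refine (ENNReal.rpow_le_rpow (hdiam j k) hα.le).trans (le_of_eq ?_)
          rw [ENNReal.mul_rpow_of_nonneg _ _ hα.le, ENNReal.mul_rpow_of_nonneg _ _ hα.le,
            ENNReal.ofReal_rpow_of_nonneg (Real.rpow_nonneg (hr j).le _) hα.le,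
            ← Real.rpow_mul (hr j).le, ← ENNReal.rpow_mul, mul_comm α]
          congr 2
          rw [hs]; ring
      _ = C ^ α * ENNReal.ofReal (r j ^ (α * (1 - n / p))) * ∑ k, (G (B j k)) ^ s := by
          rw [Finset.mul_sum]
      _ ≤ C ^ α * ENNReal.ofReal (r j ^ (α * (1 - n / p))) *
          (ENNReal.ofReal ((r j)⁻¹) ^ (1 - s) * (ν (Metric.closedBall a (r j))) ^ s) := by
          gcongr
          refine (sum_rpow_le _ hs0 hs1).trans ?_
          rw [Fintype.card_fin]
          gcongr
          exact balls_sum G hG L u huL hu a ha m (r j) (hr j) (j + 1)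
      _ = _ := by
          rw [ENNReal.mul_rpow_of_nonneg _ _ hs0.le,
            ENNReal.ofReal_rpow_of_pos (inv_pos.2 (hr j)),
            ENNReal.ofReal_rpow_of_pos (Real.rpow_pos_of_pos (hr j) _),
            mul_assoc, ← mul_assoc (ENNReal.ofReal _) (ENNReal.ofReal _),
            ← ENNReal.ofReal_mul (Real.rpow_nonneg (hr j).le _)]
          congr 4
          rw [← Real.rpow_neg_one, ← Real.rpow_mul (hr j).le, ← Real.rpow_mul (hr j).le,
            ← Real.rpow_add (hr j)]
          congr 1
          rw [hβ, hs]; field_simp; ring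
  have hle : ∀ i : ℕ, μH[α] (f '' {x | ∃ t ∈ Icc m (m + 1), x = a + t • u}) ≤
      C ^ α * (ENNReal.ofReal (1 / ((i:ℝ) + 1))) ^ s := by
    intro i
    refine hH.trans ?_
    apply Filter.liminf_le_of_frequently_le'
    refine (hbad i).mono fun j hj => (hsum j).trans ?_
    gcongr
    calc _ ≤ ENNReal.ofReal (r j ^ (-β)) * ENNReal.ofReal ((1 / ((i:ℝ) + 1)) * r j ^ β) := by
          gcongr
      _ = _ := by
          rw [← ENNReal.ofReal_mul (Real.rpow_nonneg (hr j).le _), mul_left_comm,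
            ← Real.rpow_add (hr j)]
          simp
  have hlim : Filter.Tendsto (fun i : ℕ => C ^ α * (ENNReal.ofReal (1 / ((i:ℝ) + 1))) ^ s)
      Filter.atTop (nhds 0) := by
    have h1 : Filter.Tendsto (fun i : ℕ => ENNReal.ofReal (1 / ((i:ℝ) + 1)))
        Filter.atTop (nhds 0) := by
      rw [← ENNReal.ofReal_zero]
      exact ENNReal.tendsto_ofReal tendsto_one_div_add_atTop_nhds_zero_nat
    have h2 := (ENNReal.continuous_rpow_const (y := s)).tendsto 0 |>.comp h1
    rw [ENNReal.zero_rpow_of_pos hs0] at h2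
    have h3 := ENNReal.Tendsto.const_mul (a := C ^ α) h2
      (Or.inr (ENNReal.rpow_ne_top_of_nonneg hα.le hC))
    simpa using h3
  exact le_antisymm (ge_of_tendsto' hlim hle) zero_le
end lines
end BMT

/-- **Balogh–Monti–Tyson.** If `p > n ≥ 2`, `f : ℝⁿ → ℝᴺ` is a continuous map in
`W^{1,p}(ℝⁿ; ℝᴺ)` (with weak derivative `g`), `α ∈ (1, p/(p-(n-1))]`, `L` is a
one-dimensional linear subspace of `ℝⁿ` and `β = (n-1) - p(1 - 1/α)`, then the set of
`a ∈ L^⊥` with `H^α(f(a + L)) ≠ 0` has `H^β`-measure zero. -/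
theorem BMT_sobolev_line_distortion
    (n N : ℕ) (hn : 2 ≤ n) (hN : 0 < N) (p : ℝ) (hp : (n : ℝ) < p)
    (f : EuclideanSpace ℝ (Fin n) → EuclideanSpace ℝ (Fin N)) (hf_cont : Continuous f)
    (hf_int : ∫⁻ x, ENNReal.ofReal (‖f x‖ ^ p) < ⊤)
    (g : EuclideanSpace ℝ (Fin n) → (EuclideanSpace ℝ (Fin n) →L[ℝ] EuclideanSpace ℝ (Fin N)))
    (hg_meas : Measurable g)
    (hg_int : ∫⁻ x, ENNReal.ofReal (‖g x‖ ^ p) < ⊤)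
    (h_weak_deriv : ∀ φ : EuclideanSpace ℝ (Fin n) → ℝ, ContDiff ℝ (⊤ : ℕ∞) φ →
      HasCompactSupport φ → ∀ i : Fin n,
        ∫ x, (fderiv ℝ φ x (EuclideanSpace.single i 1)) • f x =
          - ∫ x, φ x • g x (EuclideanSpace.single i 1))
    (α : ℝ) (hα₁ : 1 < α) (hα₂ : α ≤ p / (p - ((n : ℝ) - 1)))
    (L : Submodule ℝ (EuclideanSpace ℝ (Fin n))) (hL : Module.finrank ℝ L = 1)
    (β : ℝ) (hβ : β = ((n : ℝ) - 1) - p * (1 - 1 / α)) :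
    μH[β] {a : EuclideanSpace ℝ (Fin n) |
      a ∈ Lᗮ ∧ μH[α] (f '' {x | ∃ v ∈ L, x = a + v}) ≠ 0} = 0 := by
  have hn2 : (2:ℝ) ≤ n := by exact_mod_cast hn
  have hp0 : 0 < p := by linarith
  have hp1 : 1 < p := by linarith
  have hα0 : 0 < α := by linarith
  have hd : 1 < p - ((n:ℝ) - 1) := by linarith
  have hαp : α ≤ p := hα₂.trans (div_le_self hp0.le hd.le)
  have hα3 : α * (p - ((n:ℝ) - 1)) ≤ p := (le_div_iff₀ (by linarith)).1 hα₂
  have hβ0 : 0 ≤ β := by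
    have h1 : p - ((n:ℝ) - 1) ≤ p / α := by
      rw [le_div_iff₀ hα0]; linarith
    have h2 : p * (1 - 1 / α) = p - p / α := by ring
    rw [hβ, h2]; linarith
  have hβ1 : β < (n:ℝ) - 1 := by
    have h1 : 1 / α < 1 := (div_lt_one hα0).2 hα₁
    have : 0 < p * (1 - 1 / α) := mul_pos hp0 (by linarith)
    linarith
  -- the weight
  have hgm : Measurable fun x => ‖g x‖ₑ := hg_meas.enorm
  have hgf : ∫⁻ x, ‖g x‖ₑ ^ p ≠ ⊤ := by
    refine ne_of_lt (lt_of_eq_of_lt ?_ hg_int)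
    refine lintegral_congr fun x => ?_
    rw [← ofReal_norm, ENNReal.ofReal_rpow_of_nonneg (norm_nonneg _) hp0.le]
  have hgloc : LocallyIntegrable g := by
    have hmem : MemLp g (ENNReal.ofReal p) volume := by
      refine ⟨hg_meas.aestronglyMeasurable, ?_⟩
      rw [eLpNorm_lt_top_iff_lintegral_rpow_enorm_lt_top (by simpa using hp0) (by simp),
        ENNReal.toReal_ofReal hp0.le]
      exact lt_top_iff_ne_top.2 hgf
    exact hmem.locallyIntegrable (by simpa using hp1.le)
  obtain ⟨C, hC, H⟩ := BMT.morrey_sobolev n p hp1 hp f hf_cont g hgm hgloc hgf h_weak_deriv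
  set G := (volume : Measure (EuclideanSpace ℝ (Fin n))).withDensity fun x => ‖g x‖ₑ ^ p with hGdef
  have hGfin : IsFiniteMeasure G := isFiniteMeasure_withDensity hgf
  have hGac : G ≪ volume := withDensity_absolutelyContinuous _ _
  set ν := G.map (Lᗮ.starProjection : EuclideanSpace ℝ (Fin n) → EuclideanSpace ℝ (Fin n)) with hν
  have hνfin : IsFiniteMeasure ν := by rw [hν]; infer_instance
  -- a unit vector
  obtain ⟨u, huL, hu, hspan⟩ : ∃ u ∈ L, ‖u‖ = 1 ∧ ∀ v ∈ L, ∃ t : ℝ, v = t • u := by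
    obtain ⟨w, hw0, hw⟩ := finrank_eq_one_iff'.1 hL
    have hw0' : ‖(w : EuclideanSpace ℝ (Fin n))‖ ≠ 0 := by simpa using hw0
    refine ⟨‖(w : EuclideanSpace ℝ (Fin n))‖⁻¹ • (w : EuclideanSpace ℝ (Fin n)),
      L.smul_mem _ w.2, ?_, ?_⟩
    · rw [norm_smul, norm_inv, norm_norm, inv_mul_cancel₀ hw0']
    · intro v hv
      obtain ⟨c, hc⟩ := hw ⟨v, hv⟩
      refine ⟨c * ‖(w : EuclideanSpace ℝ (Fin n))‖, ?_⟩
      rw [smul_smul, mul_assoc, mul_inv_cancel₀ hw0', mul_one]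
      exact (congrArg Subtype.val hc).symm
  set r : ℕ → ℝ := fun j => 1 / (2 * ((j:ℝ) + 1)) with hrdef
  have hr : ∀ j, 0 < r j := fun j => by simp only [hrdef]; positivity
  have hr0 : Filter.Tendsto r Filter.atTop (nhds 0) := by
    have := (tendsto_one_div_add_atTop_nhds_zero_nat (𝕜 := ℝ)).const_mul (1/2)
    rw [mul_zero] at this
    refine this.congr fun j => ?_
    simp only [hrdef]; field_simp
  set A : ℕ → Set (EuclideanSpace ℝ (Fin n)) := fun i =>
    {a | a ∈ Lᗮ ∧ ∀ᶠ j in Filter.atTop, ENNReal.ofReal ((1 / ((i:ℝ) + 1)) * r j ^ β) ≤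
      ν (Metric.closedBall a (r j))} with hA
  have hAnull : ∀ i, μH[β] (A i) = 0 := by
    intro i
    refine BMT.density_null ν hβ0 (c := 1 / ((i:ℝ) + 1)) (by positivity) r hr hr0 (A i)
      (fun a ha => ha.2) fun hfin => ?_
    have h1 : μH[(n:ℝ) - 1] (A i) = 0 :=
      (Measure.hausdorffMeasure_zero_or_top hβ1 (A i)).resolve_right hfin
    have h2 := BMT.proj_null L hL (A i) h1
    obtain ⟨T, hAT, hT, hT0⟩ := exists_measurable_superset_of_null h1
    refine measure_mono_null hAT ?_
    rw [hν, Measure.map_apply (by fun_prop) hT]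
    exact hGac (BMT.proj_null L hL T hT0)
  refine measure_mono_null ?_ (measure_iUnion_null hAnull)
  rintro a ⟨ha, hpos⟩
  by_contra hnot
  apply hpos
  have hbad : ∀ i : ℕ, ∃ᶠ j : ℕ in Filter.atTop, ν (Metric.closedBall a (r j)) ≤
      ENNReal.ofReal ((1 / ((i:ℝ) + 1)) * r j ^ β) := by
    intro i
    have h1 : a ∉ A i := fun h => hnot (mem_iUnion.2 ⟨i, h⟩)
    have h2 : ∃ᶠ j in Filter.atTop, ¬ (ENNReal.ofReal ((1 / ((i:ℝ) + 1)) * r j ^ β) ≤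
        ν (Metric.closedBall a (r j))) := Filter.not_eventually.1 fun h => h1 ⟨ha, h⟩
    exact h2.mono fun j hj => (not_le.1 hj).le
  have hseg : ∀ m : ℤ, μH[α] (f '' {x | ∃ t ∈ Icc (m:ℝ) (m + 1), x = a + t • u}) = 0 := fun m =>
    BMT.segment_null hp hp0 hα0 hαp hβ f G hGac C hC H L u huL hu a ha m hbad
  refine measure_mono_null ?_ (measure_iUnion_null hseg)
  rintro _ ⟨x, ⟨v, hv, rfl⟩, rfl⟩
  obtain ⟨t, rfl⟩ := hspan v hv
  exact mem_iUnion.2 ⟨⌊t⌋, mem_image_of_mem f ⟨t, ⟨Int.floor_le t, (Int.lt_floor_add_one t).le⟩, rfl⟩⟩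
end

section
/- Let f : ℝⁿ → ℝⁿ, n ≥ 2, be a quasiconformal homeomorphism, let L be a one-dimensional linear subspace of ℝⁿ, let α ∈ (1, n), and set β = (n/α) − 1. Then the set of points a in the orthogonal complement L^⊥ for which the α-dimensional Hausdorff measure of f(a + L) is nonzero has β-dimensional Hausdorff measure zero. -/
open Set Metric Filter MeasureTheory
open scoped ENNReal Topology NNReal

noncomputable section

/-- `L_Φ(x,r) = sup {|Φ(x) - Φ(y)| : y ∈ Ω, |x - y| ≤ r}`. -/
noncomputable def linDil {X : Type*} [MetricSpace X] (Ω : Set X) (Φ : X → X) (x : X) (r : ℝ) :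
    ℝ≥0∞ :=
  ⨆ y ∈ {y | y ∈ Ω ∧ dist x y ≤ r}, edist (Φ x) (Φ y)

/-- `l_Φ(x,r) = inf {|Φ(x) - Φ(y)| : y ∈ Ω, |x - y| ≥ r}`. -/
noncomputable def linCon {X : Type*} [MetricSpace X] (Ω : Set X) (Φ : X → X) (x : X) (r : ℝ) :
    ℝ≥0∞ :=
  ⨅ y ∈ {y | y ∈ Ω ∧ r ≤ dist x y}, edist (Φ x) (Φ y)

/-- `H_Φ(x) = limsup_{r → 0⁺} L_Φ(x,r) / l_Φ(x,r)`. -/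
noncomputable def qcH {X : Type*} [MetricSpace X] (Ω : Set X) (Φ : X → X) (x : X) : ℝ≥0∞ :=
  Filter.limsup (fun r : ℝ => linDil Ω Φ x r / linCon Ω Φ x r) (𝓝[>] (0 : ℝ))

/-- A map `Φ`, viewed as a map of `Ω` into `X`, is quasiconformal if `H_Φ(x) ≤ H` for all
`x ∈ Ω`, for some finite `H ≥ 1`. -/
def QuasiconformalOn {X : Type*} [MetricSpace X] (Ω : Set X) (Φ : X → X) : Prop :=
  ∃ H : ℝ, 1 ≤ H ∧ ∀ x ∈ Ω, qcH Ω Φ x ≤ ENNReal.ofReal H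

/-- `Φ` restricts to a homeomorphism of `Ω` onto `Ω'`. -/
def IsHomeoOn {X : Type*} [TopologicalSpace X] (Φ : X → X) (Ω Ω' : Set X) : Prop :=
  ∃ e : Ω ≃ₜ Ω', ∀ x : Ω, (e x : X) = Φ (x : X)

/-- `f` is a similarity with ratio `r`. -/
def IsSimilarityWith {X : Type*} [MetricSpace X] (r : ℝ) (f : X → X) : Prop :=
  0 < r ∧ ∀ x y, dist (f x) (f y) = r * dist x y

/-- The strong separation condition for the iterated function system `f` on the set `Q`:
each `f i` maps the closure of `Q` into `Q`, and the images of the closure of `Q` are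
pairwise disjoint. -/
def StrongSeparation {X : Type*} [MetricSpace X] {ι : Type*} (f : ι → X → X) (Q : Set X) :
    Prop :=
  (∀ i, f i '' closure Q ⊆ Q) ∧
    ∀ i j, i ≠ j → Disjoint (f i '' closure Q) (f j '' closure Q)

/-- `f_σ = f_{σ₁} ∘ ⋯ ∘ f_{σ_k}` for a finite word `σ`. -/
def iterComp {X ι : Type*} (f : ι → X → X) : List ι → X → X
  | [] => id
  | i :: w => f i ∘ iterComp f w

/-- The invariant set `K = ⋂_k ⋃_{|σ| = k} f_σ(closure Q)` of an iterated function system. -/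
def invariantSet {X : Type*} [MetricSpace X] {ι : Type*} (f : ι → X → X) (Q : Set X) :
    Set X :=
  ⋂ k : ℕ, ⋃ w : Fin k → ι, iterComp f (List.ofFn w) '' closure Q

/-- The distance between two subsets of a metric space. -/
noncomputable def setDist {X : Type*} [MetricSpace X] (A B : Set X) : ℝ :=
  sInf ((fun p : X × X => dist p.1 p.2) '' A ×ˢ B)

end

namespace QCLine

/-- Weak quasisymmetry at a point `x` below scale `δ`. -/
def WQ {E : Type*} [MetricSpace E] (f : E → E) (M δ : ℝ) (x : E) : Prop :=
  ∀ y z, dist y x < dist z x → dist y x < δ → dist (f y) (f x) ≤ M * dist (f z) (f x)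

theorem exists_WQ {E : Type*} [MetricSpace E] (f : E → E) (hf : QuasiconformalOn Set.univ f) :
    ∃ M : ℝ, 1 ≤ M ∧ ∀ x, ∃ δ > 0, WQ f M δ x := by
  obtain ⟨H, hH, h⟩ := hf
  refine ⟨H + 1, by linarith, fun x => ?_⟩
  have h1 : qcH Set.univ f x < ENNReal.ofReal (H + 1) :=
    lt_of_le_of_lt (h x (mem_univ _)) (by
      rw [ENNReal.ofReal_lt_ofReal_iff (by linarith)]; linarith)
  have h2 := Filter.eventually_lt_of_limsup_lt h1
  rw [eventually_nhdsWithin_iff, Metric.eventually_nhds_iff] at h2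
  obtain ⟨δ, hδ, h2⟩ := h2
  refine ⟨δ, hδ, fun y z hyz hy => ?_⟩
  rcases eq_or_lt_of_le (dist_nonneg (x := y) (y := x)) with h0 | h0
  · have : y = x := dist_eq_zero.1 h0.symm
    subst this
    simp only [dist_self]
    positivity
  have h3 := h2 (y := dist y x) (by simpa [abs_of_pos h0] using hy) h0
  have hL : edist (f x) (f y) ≤ linDil Set.univ f x (dist y x) := by
    unfold linDil
    exact le_iSup₂_of_le (f := fun y (_ : y ∈ {y | y ∈ Set.univ ∧ dist x y ≤ _}) =>
      edist (f x) (f y)) y ⟨mem_univ _, by rw [dist_comm]⟩ le_rfl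
  have hl : linCon Set.univ f x (dist y x) ≤ edist (f x) (f z) := by
    unfold linCon
    exact iInf₂_le_of_le (f := fun z (_ : z ∈ {y | y ∈ Set.univ ∧ _ ≤ dist x y}) =>
      edist (f x) (f z)) z ⟨mem_univ _, by rw [dist_comm x z]; exact hyz.le⟩ le_rfl
  have h4 : edist (f x) (f y) / edist (f x) (f z) ≤ ENNReal.ofReal (H + 1) :=
    (ENNReal.div_le_div hL hl).trans h3.le
  have h5 : edist (f x) (f y) ≤ ENNReal.ofReal (H + 1) * edist (f x) (f z) := by
    rwa [ENNReal.div_le_iff_le_mul] at h4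
    · right; simp
    · right
      simp; linarith
  rw [edist_dist, edist_dist, ← ENNReal.ofReal_mul (by linarith),
    ENNReal.ofReal_le_ofReal_iff (by positivity)] at h5
  rwa [dist_comm (f y), dist_comm (f z)]

theorem isClosed_WQ {E : Type*} [MetricSpace E] {f : E → E} (hf : Continuous f) (M δ : ℝ) :
    IsClosed {x | WQ f M δ x} := by
  have : {x | WQ f M δ x} = ⋂ y, ⋂ z, ({x | dist y x < dist z x ∧ dist y x < δ}ᶜ ∪
      {x | dist (f y) (f x) ≤ M * dist (f z) (f x)}) := by
    ext x
    simp only [WQ, mem_ofPred_eq, mem_iInter, mem_union, mem_compl_iff]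
    refine forall_congr' fun y => forall_congr' fun z => ?_
    tauto
  rw [this]
  refine isClosed_iInter fun y => isClosed_iInter fun z => IsClosed.union ?_ ?_
  · refine IsOpen.isClosed_compl ?_
    have h1 : IsOpen {x | dist y x < dist z x} := isOpen_lt (by fun_prop) (by fun_prop)
    have h2 : IsOpen {x | dist y x < δ} := isOpen_lt (by fun_prop) (by fun_prop)
    exact h1.inter h2
  · exact isClosed_le (by fun_prop) (by fun_prop)

theorem WQ.mono {E : Type*} [MetricSpace E] {f : E → E} {M δ δ' : ℝ} {x : E} (h : WQ f M δ x)
    (hd : δ' ≤ δ) : WQ f M δ' x := fun y z h1 h2 => h y z h1 (h2.trans_le hd)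

section
variable {E : Type*} [NormedAddCommGroup E] [NormedSpace ℝ E]

theorem WQ.le {f : E → E} (hf : Continuous f) {M δ : ℝ} (hM : 1 ≤ M) {x : E} (h : WQ f M δ x)
    {y z : E} (h1 : dist y x ≤ dist z x) (h2 : dist y x < δ) :
    dist (f y) (f x) ≤ M * dist (f z) (f x) := by
  by_cases h0 : dist y x = 0
  · have : y = x := dist_eq_zero.1 h0
    subst this
    simp only [dist_self]
    positivity
  have hc : IsClosed {y | dist (f y) (f x) ≤ M * dist (f z) (f x)} :=
    isClosed_le (by fun_prop) (by fun_prop)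
  have hs : ball x (dist y x) ⊆ {y | dist (f y) (f x) ≤ M * dist (f z) (f x)} := by
    intro w hw
    rw [mem_ball] at hw
    exact h w z (hw.trans_le h1) (hw.trans h2)
  have := closure_minimal hs hc
  rw [closure_ball x h0] at this
  exact this (mem_closedBall.2 le_rfl)

/-- roundness of images of small balls -/
theorem WQ.round (f : E ≃ₜ E) {M δ : ℝ} (hM : 1 ≤ M) {x : E} (h : WQ f M δ x)
    {r : ℝ} (hr : r < δ) {q : E} (hq : dist q x = r) :
    f '' closedBall x r ⊆ closedBall (f x) (M * dist (f q) (f x)) ∧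
    ball (f x) (dist (f q) (f x) / M) ⊆ f '' closedBall x r ∧
    ∀ y, r ≤ dist y x → dist (f q) (f x) / M ≤ dist (f y) (f x) := by
  have hM0 : 0 < M := by linarith
  have h3 : ∀ y, r ≤ dist y x → dist (f q) (f x) / M ≤ dist (f y) (f x) := by
    intro y hy
    rw [div_le_iff₀' hM0]
    exact h.le f.continuous hM (hq.trans_le hy) (by rw [hq]; exact hr)
  refine ⟨?_, ?_, h3⟩
  · rintro _ ⟨y, hy, rfl⟩
    rw [mem_closedBall] at hy ⊢
    exact h.le f.continuous hM (hy.trans hq.ge) (hy.trans_lt hr)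
  · intro w hw
    refine ⟨f.symm w, ?_, by simp⟩
    by_contra hc
    rw [mem_closedBall, not_le] at hc
    have := h3 _ hc.le
    simp only [Homeomorph.apply_symm_apply] at this
    rw [mem_ball] at hw
    linarith

/-- If the good points are dense near `x` on the image side, then `f` contracts a definite
smaller ball around `x`. -/
theorem WQ.contract (M : ℝ) (hM : 1 ≤ M) : ∃ ε > 0, ε ≤ 1 / 2 ∧ ∃ σ > 0, σ ≤ 1 ∧
    ∀ (f : E ≃ₜ E) (δ : ℝ) (x q u : E) (r : ℝ), WQ f M δ x → 0 < r → r < δ → dist q x = r →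
      ‖u‖ = 1 →
      (∀ w ∈ closedBall (f x) (3 * M * dist (f q) (f x)), ∃ y, WQ f M δ y ∧
        dist (f y) w < σ * dist (f q) (f x)) →
      ∀ y, dist y x ≤ ε * r → dist (f y) (f x) ≤ dist (f q) (f x) / (2 * M) := by
  have hM0 : 0 < M := by linarith
  obtain ⟨m, hm⟩ : ∃ m : ℕ, m = ⌈64 * M ^ 4⌉₊ := ⟨_, rfl⟩
  have hm1 : 64 * M ^ 4 ≤ m := hm ▸ Nat.le_ceil _
  have hm2 : (m : ℝ) < 64 * M ^ 4 + 1 := hm ▸ Nat.ceil_lt_add_one (by positivity)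
  have hM2 : 1 ≤ M ^ 2 := one_le_pow₀ hM
  have hM3 : 1 ≤ M ^ 3 := one_le_pow₀ hM
  refine ⟨1 / 2 ^ (m + 1), by positivity, ?_, 1 / (32 * M ^ 3), by positivity, ?_, ?_⟩
  · rw [pow_succ]
    have : (1:ℝ) ≤ 2 ^ m := one_le_pow₀ (by norm_num)
    rw [div_le_div_iff₀ (by positivity) (by positivity)]
    linarith
  · rw [div_le_one (by positivity)]; linarith
  intro f δ x q u r hx hr hrδ hq hu hd y0 hy0
  by_contra hcon
  push Not at hcon
  set s := dist (f q) (f x) with hs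
  set σ := 1 / (32 * M ^ 3) with hσ
  have hσ0 : 0 < σ := by positivity
  have hs0 : 0 < s := by
    rw [hs, dist_pos]
    intro h
    have := f.injective h
    subst this
    simp at hq; linarith
  have hσM : σ * M = 1 / (32 * M ^ 2) := by rw [hσ]; field_simp
  set A := 1 / (4 * M ^ 2) with hA
  have hA0 : 0 < A := by positivity
  have hσA : σ * M = A / 8 := by rw [hσM, hA]; field_simp; norm_num
  have hσA' : σ ≤ A / 8 := by rw [← hσA]; nlinarith
  have hA1 : A ≤ 1 / 4 := by
    rw [hA, div_le_div_iff₀ (by positivity) (by positivity)]; linarith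
  have hmσ1 : 2 * M ≤ m * σ := by
    rw [hσ, mul_one_div, le_div_iff₀ (by positivity)]
    nlinarith
  have hmσ2 : m * σ ≤ 2 * M + σ := by
    have : (64 * M ^ 4 + 1) * σ = 2 * M + σ := by rw [hσ]; field_simp; ring
    rw [← this]; gcongr
  -- the chain
  have hch : ∀ i : ℕ, ∃ y, i ≤ m → WQ f M δ y ∧
      dist (f y) (f x + ((A + i * σ) * s) • u) < σ * s := by
    intro i
    by_cases hi : i ≤ m
    · obtain ⟨y, hy⟩ := hd (f x + ((A + i * σ) * s) • u) (by
        rw [mem_closedBall, dist_eq_norm, add_sub_cancel_left, norm_smul, hu, mul_one,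
          Real.norm_of_nonneg (by positivity)]
        gcongr
        have : (i : ℝ) * σ ≤ m * σ := by gcongr
        linarith)
      exact ⟨y, fun _ => hy⟩
    · exact ⟨x, fun h => absurd h hi⟩
  choose y hy using hch
  have hlow : ∀ i ≤ m, (A + i * σ) * s - σ * s < dist (f (y i)) (f x) := by
    intro i hi
    have h1 := (hy i hi).2
    have h2 : dist (f x + ((A + i * σ) * s) • u) (f x) = (A + i * σ) * s := by
      rw [dist_eq_norm, add_sub_cancel_left, norm_smul, hu, mul_one,
          Real.norm_of_nonneg (by positivity)]
    have h3 := dist_triangle_left (f x + ((A + i * σ) * s) • u) (f x) (f (y i))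
    linarith
  have hup : ∀ i ≤ m, dist (f (y i)) (f x) < (A + i * σ) * s + σ * s := by
    intro i hi
    have h1 := (hy i hi).2
    have h2 : dist (f x + ((A + i * σ) * s) • u) (f x) = (A + i * σ) * s := by
      rw [dist_eq_norm, add_sub_cancel_left, norm_smul, hu, mul_one,
          Real.norm_of_nonneg (by positivity)]
    have h3 := dist_triangle (f (y i)) (f x + ((A + i * σ) * s) • u) (f x)
    linarith
  have hind : ∀ i ≤ m, dist (y i) x ≤ 2 ^ i * (1 / 2 ^ (m + 1) * r) := by
    intro i
    induction i with
    | zero =>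
      intro _
      simp only [pow_zero, one_mul]
      by_contra hc
      push Not at hc
      have h1 := hx y0 (y 0) (hy0.trans_lt hc) (by
        refine hy0.trans_lt (lt_of_le_of_lt ?_ hrδ)
        have : (1 : ℝ) / 2 ^ (m + 1) ≤ 1 := by
          rw [div_le_one (by positivity)]; exact one_le_pow₀ (by norm_num)
        nlinarith)
      have h2 := hup 0 (Nat.zero_le _)
      have h3 : s / (2 * M) < M * ((A + (0:ℕ) * σ) * s + σ * s) :=
        hcon.trans_le (h1.trans (by gcongr))
      have h4 : M * ((A + (0:ℕ) * σ) * s + σ * s) = (M * A + σ * M) * s := by push_cast; ring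
      have h5 : M * A = 1 / (4 * M) := by rw [hA]; field_simp
      have h6 : s / (2 * M) = (2 * (M * A)) * s := by rw [h5]; field_simp; norm_num
      rw [h4, h6, hσA] at h3
      have := lt_of_mul_lt_mul_right h3 hs0.le
      nlinarith
    | succ i ih =>
      intro hi
      have ih := ih (by omega)
      have hb : dist (y i) x ≤ r := by
        refine ih.trans ?_
        have : (2:ℝ) ^ i ≤ 2 ^ (m + 1) := pow_le_pow_right₀ (by norm_num) (by omega)
        rw [← mul_assoc, mul_one_div]
        have : (2:ℝ) ^ i / 2 ^ (m + 1) ≤ 1 := (div_le_one (by positivity)).2 this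
        nlinarith
      have hstep : dist (y (i+1)) (y i) ≤ dist (y i) x := by
        by_contra hc
        push Not at hc
        have h1 := (hy i (by omega)).1 x (y (i+1)) (by rwa [dist_comm]) (by
          rw [dist_comm]; linarith)
        have h2 : dist (f (y (i+1))) (f (y i)) < 3 * σ * s := by
          have ha := (hy i (by omega)).2
          have hb := (hy (i+1) hi).2
          have hc : dist (f x + ((A + (i+1 : ℕ) * σ) * s) • u) (f x + ((A + i * σ) * s) • u)
              = σ * s := by
            rw [dist_eq_norm, add_sub_add_left_eq_sub, ← sub_smul, norm_smul, hu, mul_one]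
            have : ((A + (i+1 : ℕ) * σ) * s) - ((A + i * σ) * s) = σ * s := by
              push_cast; ring
            rw [this, Real.norm_of_nonneg (by positivity)]
          have hd := dist_triangle4_right (f (y (i+1))) (f (y i))
            (f x + ((A + (i+1 : ℕ) * σ) * s) • u) (f x + ((A + i * σ) * s) • u)
          linarith
        have h3 := hlow i (by omega)
        rw [dist_comm] at h3
        have h4 : M * dist (f (y (i+1))) (f (y i)) ≤ M * (3 * σ * s) := by gcongr
        have h5 : M * (3 * σ * s) = 3 * (A / 8) * s := by rw [← hσA]; ring
        have h6 : 0 ≤ i * σ * s := by positivity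
        have h7 : σ * s ≤ A / 8 * s := by gcongr
        nlinarith
      calc dist (y (i+1)) x ≤ dist (y (i+1)) (y i) + dist (y i) x := dist_triangle _ _ _
        _ ≤ 2 * (2 ^ i * (1 / 2 ^ (m + 1) * r)) := by linarith
        _ = _ := by ring
  have hfin := hind m le_rfl
  have hle : dist (y m) x ≤ r := by
    refine hfin.trans ?_
    have : (2:ℝ) ^ m * (1 / 2 ^ (m + 1) * r) = r / 2 := by rw [pow_succ]; field_simp
    linarith
  have h1 := hx.le f.continuous hM (y := y m) (z := q) (hle.trans hq.ge) (hle.trans_lt hrδ)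
  have h2 := hlow m le_rfl
  have h3 : 2 * M * s ≤ m * σ * s := by gcongr
  have h4 : σ * s ≤ A / 8 * s := by gcongr
  have h5 : 0 < M * s := by positivity
  nlinarith

end

set_option linter.unusedSectionVars false
section
variable {E : Type*} [NormedAddCommGroup E] [NormedSpace ℝ E] [FiniteDimensional ℝ E]
  [MeasurableSpace E] [BorelSpace E]

/-- The pull-back of `m` under the homeomorphism `f`. -/
noncomputable def nu (f : E ≃ₜ E) (m : Measure E) : Measure E := m.map f.symm

theorem nu_apply (f : E ≃ₜ E) (m : Measure E) (A : Set E) : nu f m A = m (f '' A) := by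
  rw [nu, f.symm.measurableEmbedding.map_apply]
  congr 1
  ext y
  exact ⟨fun h => ⟨_, h, by simp⟩, by rintro ⟨x, hx, rfl⟩; simpa using hx⟩

instance (f : E ≃ₜ E) (m : Measure E) [IsLocallyFiniteMeasure m] :
    IsFiniteMeasureOnCompacts (nu f m) :=
  ⟨fun K hK => by
    rw [nu_apply]
    exact (hK.image f.continuous).measure_lt_top⟩

/-- The diameter of the image of a small ball is controlled by the volume of the image. -/
theorem ediam_pow_le (f : E ≃ₜ E) (m : Measure E) [m.IsAddHaarMeasure] [Nontrivial E]
    (M : ℝ) (hM : 1 ≤ M) :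
    ∃ C : ℝ≥0, ∀ δ x r, WQ f M δ x → 0 < r → r < δ →
      ediam (f '' closedBall x r) ^ (Module.finrank ℝ E) ≤ C * nu f m (closedBall x r) := by
  have hM0 : 0 < M := by linarith
  set n := Module.finrank ℝ E with hn
  have hω0 : m (ball 0 1) ≠ 0 := (measure_ball_pos _ _ one_pos).ne'
  have hω1 : m (ball 0 1) ≠ ∞ := measure_ball_lt_top.ne
  refine ⟨((ENNReal.ofReal ((2 * M ^ 2) ^ n)) * (m (ball 0 1))⁻¹).toNNReal, ?_⟩
  rw [ENNReal.coe_toNNReal (ENNReal.mul_ne_top (by simp) (by simp [hω0]))]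
  intro δ x r hx hr hrδ
  obtain ⟨e, he⟩ := exists_norm_eq E zero_le_one
  obtain ⟨q, hq⟩ : ∃ q, dist q x = r := ⟨x + r • e, by simp [norm_smul, he, abs_of_pos hr]⟩
  obtain ⟨h1, h2, -⟩ := hx.round f hM hrδ hq
  set s := dist (f q) (f x) with hs
  have hs0 : 0 ≤ s := dist_nonneg
  have h3 : ediam (f '' closedBall x r) ≤ ENNReal.ofReal (2 * M * s) := by
    refine (ediam_mono h1).trans ?_
    rw [← Metric.closedEBall_ofReal (by positivity)]
    refine ediam_closedEBall_le.trans ?_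
    rw [mul_assoc, ENNReal.ofReal_mul (p := 2) (by norm_num)]
    simp
  have h4 : ENNReal.ofReal ((s / M) ^ n) * m (ball 0 1) ≤ nu f m (closedBall x r) := by
    rw [nu_apply, ← Measure.addHaar_ball m (f x) (by positivity)]
    exact measure_mono h2
  calc ediam (f '' closedBall x r) ^ n ≤ ENNReal.ofReal (2 * M * s) ^ n := by gcongr
    _ = ENNReal.ofReal ((2 * M ^ 2) ^ n) * ENNReal.ofReal ((s / M) ^ n) := by
      rw [← ENNReal.ofReal_pow (by positivity), ← ENNReal.ofReal_mul (by positivity), ← mul_pow]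
      congr 2
      field_simp
    _ = ENNReal.ofReal ((2 * M ^ 2) ^ n) * (m (ball 0 1))⁻¹ *
        (ENNReal.ofReal ((s / M) ^ n) * m (ball 0 1)) := by
      rw [mul_assoc, mul_left_comm _ (ENNReal.ofReal ((s / M) ^ n)),
        ENNReal.inv_mul_cancel hω0 hω1, mul_one]
    _ ≤ _ := by gcongr

variable {F : Type*} [NormedAddCommGroup F] [NormedSpace ℝ F] [FiniteDimensional ℝ F]
  [MeasurableSpace F] [BorelSpace F]

/-- `c` bounds the upper integral of the lengths of the images of the fibres of `A`. -/
def UB (f : E ≃ₜ E) (P : E → F) (μ : Measure F) (A : Set E) (c : ℝ≥0∞) : Prop :=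
  ∃ G : F → ℝ≥0∞, Measurable G ∧ (∀ a, μH[1] (f '' (P ⁻¹' {a} ∩ A)) ≤ G a) ∧ ∫⁻ a, G a ∂μ ≤ c

theorem UB.mono {f : E ≃ₜ E} {P : E → F} {μ : Measure F} {A A' : Set E} {c c' : ℝ≥0∞}
    (h : UB f P μ A c) (hA : A' ⊆ A) (hc : c ≤ c') : UB f P μ A' c' := by
  obtain ⟨G, h1, h2, h3⟩ := h
  exact ⟨G, h1, fun a => (measure_mono (by gcongr)).trans (h2 a), h3.trans hc⟩

theorem UB.iUnion {f : E ≃ₜ E} {P : E → F} {μ : Measure F} {A : ℕ → Set E} {c : ℕ → ℝ≥0∞}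
    (h : ∀ k, UB f P μ (A k) (c k)) : UB f P μ (⋃ k, A k) (∑' k, c k) := by
  choose G h1 h2 h3 using h
  refine ⟨fun a => ∑' k, G k a, Measurable.tsum h1, fun a => ?_, ?_⟩
  · rw [inter_iUnion, image_iUnion]
    exact (measure_iUnion_le _).trans (ENNReal.tsum_le_tsum fun k => h2 k a)
  · rw [lintegral_tsum fun k => (h1 k).aemeasurable]
    exact ENNReal.tsum_le_tsum h3

theorem UB.union {f : E ≃ₜ E} {P : E → F} {μ : Measure F} {A B : Set E} {c d : ℝ≥0∞}
    (h : UB f P μ A c) (h' : UB f P μ B d) : UB f P μ (A ∪ B) (c + d) := by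
  obtain ⟨G, h1, h2, h3⟩ := h
  obtain ⟨G', h1', h2', h3'⟩ := h'
  refine ⟨G + G', h1.add h1', fun a => ?_, ?_⟩
  · rw [inter_union_distrib_left, image_union]
    exact (measure_union_le _ _).trans (add_le_add (h2 a) (h2' a))
  · simp only [Pi.add_apply]
    rw [lintegral_add_left h1]
    exact add_le_add h3 h3'

theorem young (r τ : ℝ) (hr : 0 < r) (hτ : 0 < τ) (d : ℕ) (D : ℝ≥0∞) :
    D * ENNReal.ofReal (r ^ d) ≤ ENNReal.ofReal τ * ENNReal.ofReal (r ^ (d + 1)) +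
      ENNReal.ofReal (τ⁻¹ ^ d) * D ^ (d + 1) := by
  rcases le_total D (ENNReal.ofReal (τ * r)) with h | h
  · refine le_add_right ((mul_le_mul_left h _).trans_eq ?_)
    rw [← ENNReal.ofReal_mul (by positivity), ← ENNReal.ofReal_mul (by positivity)]
    congr 1; ring
  · refine le_add_left ?_
    have : ENNReal.ofReal r ≤ ENNReal.ofReal τ⁻¹ * D := by
      calc ENNReal.ofReal r = ENNReal.ofReal τ⁻¹ * ENNReal.ofReal (τ * r) := by
            rw [← ENNReal.ofReal_mul (by positivity)]
            congr 1; field_simp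
        _ ≤ _ := by gcongr
    calc D * ENNReal.ofReal (r ^ d) ≤ D * (ENNReal.ofReal τ⁻¹ * D) ^ d := by
          rw [ENNReal.ofReal_pow hr.le]; gcongr
      _ = _ := by
        rw [mul_pow, ENNReal.ofReal_pow (by positivity)]; ring

/-- The comparison measure. -/
noncomputable def kap (f : E ≃ₜ E) (m : Measure E) (d : ℕ) (τ : ℝ) : Measure E :=
  ENNReal.ofReal τ • m + ENNReal.ofReal (τ⁻¹ ^ d) • nu f m

instance (f : E ≃ₜ E) (m : Measure E) [IsLocallyFiniteMeasure m] (d : ℕ) (τ : ℝ) :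
    IsFiniteMeasureOnCompacts (kap f m d τ) :=
  ⟨fun K hK => by
    simp only [kap, Measure.add_apply, Measure.smul_apply, smul_eq_mul]
    exact ENNReal.add_lt_top.2 ⟨ENNReal.mul_lt_top (by simp) hK.measure_lt_top,
      ENNReal.mul_lt_top (by simp) hK.measure_lt_top⟩⟩

theorem UB.piece (f : E ≃ₜ E) (m : Measure E) [m.IsAddHaarMeasure] [Nontrivial E]
    (P : E →L[ℝ] F) (hP : ∀ x, ‖P x‖ ≤ ‖x‖) (μ : Measure F) [μ.IsAddHaarMeasure] (d : ℕ)
    (hdE : Module.finrank ℝ E = d + 1) (hdF : Module.finrank ℝ F = d)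
    (M : ℝ) (hM : 1 ≤ M) :
    ∃ C : ℝ≥0, ∀ δ > 0, ∀ τ > 0, ∀ A : Set E, (∀ x ∈ A, WQ f M δ x) →
      UB f P μ A (C * kap f m d τ A) := by
  obtain ⟨C₁, hC₁⟩ := ediam_pow_le f m M hM
  rw [hdE] at hC₁
  have hω0 : m (closedBall 0 1) ≠ 0 := (measure_closedBall_pos _ _ one_pos).ne'
  have hω1 : m (closedBall 0 1) ≠ ∞ := measure_closedBall_lt_top.ne
  have hμ1 : μ (closedBall 0 1) ≠ ∞ := measure_closedBall_lt_top.ne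
  set C₀ : ℝ≥0∞ := μ (closedBall 0 1) * ((m (closedBall 0 1))⁻¹ + C₁) with hC₀
  have hC₀t : C₀ ≠ ∞ := ENNReal.mul_ne_top hμ1 (by simp [hω0])
  refine ⟨C₀.toNNReal, ?_⟩
  rw [ENNReal.coe_toNNReal hC₀t]
  intro δ hδ τ hτ A hA
  set κ := kap f m d τ with hκ
  -- a single ball
  have hball : ∀ x ∈ A, ∀ r, 0 < r → r < δ →
      ediam (f '' closedBall x r) * μ (closedBall (P x) r) ≤ C₀ * κ (closedBall x r) := by
    intro x hx r hr hrδ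
    have h1 := hC₁ δ x r (hA x hx) hr hrδ
    rw [Measure.addHaar_closedBall' μ _ hr.le, hdF, ← mul_assoc]
    have h2 := young r τ hr hτ d (ediam (f '' closedBall x r))
    have h3 : ENNReal.ofReal (r ^ (d+1)) = (m (closedBall 0 1))⁻¹ * m (closedBall x r) := by
      rw [Measure.addHaar_closedBall' m _ hr.le, hdE, mul_left_comm,
        ENNReal.inv_mul_cancel hω0 hω1, mul_one]
    rw [h3] at h2
    calc _ ≤ (ENNReal.ofReal τ * ((m (closedBall 0 1))⁻¹ * m (closedBall x r)) +
        ENNReal.ofReal (τ⁻¹ ^ d) * ediam (f '' closedBall x r) ^ (d + 1)) * μ (closedBall 0 1) := by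
          gcongr
      _ ≤ (ENNReal.ofReal τ * (((m (closedBall 0 1))⁻¹ + C₁) * m (closedBall x r)) +
        ENNReal.ofReal (τ⁻¹ ^ d) * (((m (closedBall 0 1))⁻¹ + C₁) * nu f m (closedBall x r))) *
          μ (closedBall 0 1) := by
          gcongr
          · exact le_self_add
          · refine h1.trans ?_
            gcongr
            exact le_add_self
      _ = _ := by
        rw [hC₀, hκ]
        simp only [kap, Measure.add_apply, Measure.smul_apply, smul_eq_mul]
        ring
  have hstep : ∀ j : ℕ, ∃ (t : Set E) (r : E → ℝ), t.Countable ∧ t ⊆ A ∧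
      (∀ x ∈ t, r x ∈ {r | 0 < r ∧ r < δ ∧ ediam (f '' closedBall x r) ≤ ((j : ℝ≥0∞) + 1)⁻¹}) ∧
      (A ⊆ ⋃ x ∈ t, closedBall x (r x)) ∧
      (∑' x : t, κ (closedBall x (r x))) ≤ κ A + ((j : ℝ≥0∞) + 1)⁻¹ := by
    intro j
    refine Besicovitch.exists_closedBall_covering_tsum_measure_le κ (by simp)
      (fun x => {r | 0 < r ∧ r < δ ∧ ediam (f '' closedBall x r) ≤ ((j : ℝ≥0∞) + 1)⁻¹}) A ?_
    intro x hx δ' hδ'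
    have hj : (0 : ℝ) < 1 / (2 * (j + 1)) := by positivity
    obtain ⟨ρ, hρ, h⟩ := Metric.continuous_iff.1 f.continuous x _ hj
    set r := min (ρ / 2) (min (δ / 2) (δ' / 2))
    have hr0 : 0 < r := by positivity
    have hr1 : r ≤ ρ / 2 := min_le_left _ _
    have hr2 : r ≤ δ / 2 := (min_le_right _ _).trans (min_le_left _ _)
    have hr3 : r ≤ δ' / 2 := (min_le_right _ _).trans (min_le_right _ _)
    refine ⟨r, ⟨hr0, by linarith, ?_⟩, hr0, by linarith⟩
    have hsub : f '' closedBall x r ⊆ closedBall (f x) (1 / (2 * (j + 1))) := by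
      rintro _ ⟨y, hy, rfl⟩
      rw [mem_closedBall] at hy ⊢
      exact (h y (by linarith)).le
    refine (ediam_mono hsub).trans ?_
    rw [← Metric.closedEBall_ofReal hj.le]
    refine ediam_closedEBall_le.trans ?_
    have : ((j : ℝ≥0∞) + 1)⁻¹ = ENNReal.ofReal (2 * (1 / (2 * (j + 1)))) := by
      have : (2 * (1 / (2 * (j + 1 : ℝ)))) = (j + 1 : ℝ)⁻¹ := by field_simp
      rw [this, ENNReal.ofReal_inv_of_pos (by positivity),
        ENNReal.ofReal_add (by positivity) zero_le_one]
      simp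
    rw [this, ENNReal.ofReal_mul (by norm_num)]
    simp
  choose t r ht1 ht2 hr ht3 ht4 using hstep
  have hcount : ∀ j, Countable (t j) := fun j => (ht1 j).to_subtype
  set Fj : ℕ → F → ℝ≥0∞ := fun j a => ∑' x : t j,
    (closedBall (P (x : E)) (r j x)).indicator
      (fun _ => ediam (f '' closedBall (x : E) (r j x))) a with hFj
  have hFm : ∀ j, Measurable (Fj j) := fun j =>
    Measurable.tsum fun x => measurable_const.indicator measurableSet_closedBall
  have htend : Tendsto (fun j : ℕ => ((j : ℝ≥0∞) + 1)⁻¹) atTop (𝓝 0) := by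
    have := (tendsto_add_atTop_iff_nat 1).2 ENNReal.tendsto_inv_nat_nhds_zero
    simpa using this
  refine ⟨fun a => liminf (fun j => Fj j a) atTop, Measurable.liminf hFm, fun a => ?_, ?_⟩
  · refine (Measure.hausdorffMeasure_le_liminf_tsum 1 _ (fun j : ℕ => ((j : ℝ≥0∞) + 1)⁻¹) htend
      (fun j (x : t j) => f '' (P ⁻¹' {a} ∩ closedBall (x : E) (r j x))) ?_ ?_).trans ?_
    · refine Eventually.of_forall fun j x => ?_
      exact (ediam_mono (by gcongr; exact inter_subset_right)).trans (hr j x x.2).2.2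
    · refine Eventually.of_forall fun j => ?_
      rintro _ ⟨y, ⟨hy1, hy2⟩, rfl⟩
      obtain ⟨x, hx, hyx⟩ := mem_iUnion₂.1 (ht3 j hy2)
      exact mem_iUnion.2 ⟨⟨x, hx⟩, y, ⟨hy1, hyx⟩, rfl⟩
    · refine liminf_le_liminf (Eventually.of_forall fun j => ?_)
      refine ENNReal.tsum_le_tsum fun x => ?_
      rw [ENNReal.rpow_one]
      by_cases ha : a ∈ closedBall (P (x : E)) (r j x)
      · rw [indicator_of_mem ha]
        exact ediam_mono (by gcongr; exact inter_subset_right)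
      · have : P ⁻¹' {a} ∩ closedBall (x : E) (r j x) = ∅ := by
          rw [eq_empty_iff_forall_notMem]
          rintro y ⟨hy1, hy2⟩
          apply ha
          rw [mem_preimage, mem_singleton_iff] at hy1
          rw [mem_closedBall, dist_eq_norm] at hy2 ⊢
          rw [← hy1, ← map_sub]
          exact (hP _).trans hy2
        rw [this]
        simp
  · refine (lintegral_liminf_le hFm).trans ?_
    have hb : ∀ j, ∫⁻ a, Fj j a ∂μ ≤ C₀ * (κ A + ((j : ℝ≥0∞) + 1)⁻¹) := by
      intro j
      rw [hFj, lintegral_tsum fun x =>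
        (measurable_const.indicator measurableSet_closedBall).aemeasurable]
      refine le_trans ?_ (mul_le_mul_right (ht4 j) C₀)
      rw [← ENNReal.tsum_mul_left]
      refine ENNReal.tsum_le_tsum fun x => ?_
      rw [lintegral_indicator measurableSet_closedBall, setLIntegral_const]
      obtain ⟨h1, h2, -⟩ := hr j x x.2
      exact hball x (ht2 j x.2) _ h1 h2
    refine (liminf_le_liminf (Eventually.of_forall hb)).trans ?_
    have : Tendsto (fun j : ℕ => C₀ * (κ A + ((j : ℝ≥0∞) + 1)⁻¹)) atTop (𝓝 (C₀ * (κ A + 0))) :=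
      ENNReal.Tendsto.const_mul (tendsto_const_nhds.add htend) (Or.inr hC₀t)
    rw [this.liminf_eq, add_zero]

end

section
variable {E : Type*} [NormedAddCommGroup E] [NormedSpace ℝ E] [FiniteDimensional ℝ E]
  [MeasurableSpace E] [BorelSpace E]
variable {F : Type*} [NormedAddCommGroup F] [NormedSpace ℝ F] [FiniteDimensional ℝ F]
  [MeasurableSpace F] [BorelSpace F]

/-- The set of points which are good below the scale `1 / (k + 1)`. -/
def good (f : E ≃ₜ E) (M : ℝ) (k : ℕ) : Set E := {x | WQ f M (1 / ((k : ℝ) + 1)) x}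

theorem measurableSet_good (f : E ≃ₜ E) (M : ℝ) (k : ℕ) : MeasurableSet (good f M k) :=
  (isClosed_WQ f.continuous _ _).measurableSet

theorem iUnion_good (f : E ≃ₜ E) (M : ℝ) (hW : ∀ x, ∃ δ > 0, WQ f M δ x) :
    ⋃ k, good f M k = univ := by
  rw [eq_univ_iff_forall]
  intro x
  obtain ⟨δ, hδ, hx⟩ := hW x
  obtain ⟨k, hk⟩ := exists_nat_one_div_lt hδ
  exact mem_iUnion.2 ⟨k, hx.mono hk.le⟩

theorem UB.full (f : E ≃ₜ E) (m : Measure E) [m.IsAddHaarMeasure] [Nontrivial E]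
    (P : E →L[ℝ] F) (hP : ∀ x, ‖P x‖ ≤ ‖x‖) (μ : Measure F) [μ.IsAddHaarMeasure] (d : ℕ)
    (hdE : Module.finrank ℝ E = d + 1) (hdF : Module.finrank ℝ F = d)
    (M : ℝ) (hM : 1 ≤ M) (hW : ∀ x, ∃ δ > 0, WQ f M δ x) :
    ∃ C : ℝ≥0, ∀ τ > 0, ∀ A : Set E, MeasurableSet A → UB f P μ A (C * kap f m d τ A) := by
  obtain ⟨C, hC⟩ := UB.piece f m P hP μ d hdE hdF M hM
  refine ⟨C, fun τ hτ A hA => ?_⟩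
  have hmeas : ∀ k, MeasurableSet (disjointed (good f M) k) :=
    fun k => MeasurableSet.disjointed (measurableSet_good f M) k
  have h1 : ∀ k, UB f P μ (A ∩ disjointed (good f M) k)
      (C * kap f m d τ (A ∩ disjointed (good f M) k)) := fun k =>
    hC (1 / ((k:ℝ) + 1)) (by positivity) τ hτ _ fun x hx => disjointed_subset _ _ hx.2
  have h2 := UB.iUnion h1
  rw [← inter_iUnion, iUnion_disjointed, iUnion_good f M hW, inter_univ,
    ENNReal.tsum_mul_left, ← measure_iUnion, ← inter_iUnion, iUnion_disjointed,
    iUnion_good f M hW, inter_univ] at h2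
  · exact h2
  · intro i j hij
    exact ((disjoint_disjointed (good f M)) hij).mono inter_subset_right inter_subset_right
  · exact fun k => hA.inter (hmeas k)

theorem UB.diff_null (f : E ≃ₜ E) (m : Measure E) [m.IsAddHaarMeasure] [Nontrivial E]
    (P : E →L[ℝ] F) (hP : ∀ x, ‖P x‖ ≤ ‖x‖) (μ : Measure F) [μ.IsAddHaarMeasure] (d : ℕ)
    (hd : 1 ≤ d)
    (hdE : Module.finrank ℝ E = d + 1) (hdF : Module.finrank ℝ F = d)
    (M : ℝ) (hM : 1 ≤ M) (hW : ∀ x, ∃ δ > 0, WQ f M δ x) :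
    ∃ C : ℝ≥0, ∀ τ > 0, ∀ A Z : Set E, MeasurableSet A → MeasurableSet Z → m Z = 0 →
      nu f m A ≠ ∞ → ∀ ε : ℝ≥0, 0 < ε → UB f P μ A (C * kap f m d τ (A \ Z) + ε) := by
  obtain ⟨C, hC⟩ := UB.full f m P hP μ d hdE hdF M hM hW
  refine ⟨C, fun τ hτ A Z hA hZ hZ0 hA1 ε hε => ?_⟩
  have h1 := hC τ hτ (A \ Z) (hA.diff hZ)
  have h2 : ∃ τ' > 0, (C : ℝ≥0∞) * kap f m d τ' (A ∩ Z) ≤ ε := by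
    have hz : m (A ∩ Z) = 0 := measure_mono_null inter_subset_right hZ0
    have hlim : Tendsto (fun t : ℝ => (C : ℝ≥0∞) * (ENNReal.ofReal (t⁻¹ ^ d) * nu f m A)) atTop
        (𝓝 (C * (ENNReal.ofReal (0 ^ d) * nu f m A))) := by
      refine ENNReal.Tendsto.const_mul (ENNReal.Tendsto.mul_const ?_ (Or.inr hA1)) (Or.inr (by simp))
      exact (ENNReal.continuous_ofReal.tendsto _).comp (tendsto_inv_atTop_zero.pow d)
    rw [zero_pow (by omega)] at hlim
    simp only [ENNReal.ofReal_zero, zero_mul, mul_zero] at hlim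
    have h3 := (hlim.eventually_lt_const (show (0:ℝ≥0∞) < (ε:ℝ≥0∞) by simpa using hε)).and
      (eventually_gt_atTop (0:ℝ))
    obtain ⟨τ', h4, h5⟩ := h3.exists
    refine ⟨τ', h5, le_trans ?_ h4.le⟩
    simp only [kap, Measure.add_apply, Measure.smul_apply, smul_eq_mul, hz, mul_zero, zero_add]
    gcongr
    exact inter_subset_left
  obtain ⟨τ', hτ', h3⟩ := h2
  have h4 := (hC τ' hτ' (A ∩ Z) (hA.inter hZ)).mono subset_rfl h3
  have h5 := h1.union h4
  rwa [sdiff_union_inter] at h5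

theorem UB.lower {f : E ≃ₜ E} {P : E →L[ℝ] F} {μ : Measure F}
    (J : F →L[ℝ] E) (hJ : ∀ b, ‖J b‖ ≤ ‖b‖) (hPJ : ∀ b, P (J b) = b) (e : E) (he : ‖e‖ = 1)
    (hPe : P e = 0) {x : E} {r ε s₁ s₂ : ℝ} (hr : 0 < r) (hε : ε ≤ 1 / 2) {c : ℝ≥0∞}
    (h : UB f P μ (closedBall x r) c) (h1 : ∀ y, dist y x ≤ ε * r → dist (f y) (f x) ≤ s₁)
    (h2 : ∀ y, r ≤ dist y x → s₂ ≤ dist (f y) (f x)) :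
    ENNReal.ofReal (s₂ - s₁) * μ (closedBall (P x) (ε * r)) ≤ c := by
  obtain ⟨G, hG, hG2, hG3⟩ := h
  refine le_trans ?_ hG3
  rw [← setLIntegral_const]
  refine le_trans ?_ (setLIntegral_le_lintegral (closedBall (P x) (ε * r)) G)
  refine setLIntegral_mono hG fun a ha => le_trans ?_ (hG2 a)
  set S := P ⁻¹' {a} ∩ closedBall x r with hS
  set p := x + J (a - P x) with hp
  have hpa : P p = a := by simp [hp, hPJ]
  have hpx : dist p x ≤ ε * r := by
    rw [hp, dist_eq_norm, add_sub_cancel_left]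
    rw [mem_closedBall, dist_eq_norm] at ha
    exact (hJ _).trans ha
  have hεr : ε * r ≤ r := by nlinarith
  obtain ⟨t, -, ht⟩ : r ∈ (fun t : ℝ => dist (p + t • e) x) '' Icc 0 (2 * r) := by
    refine intermediate_value_Icc (by linarith) (by fun_prop) ⟨?_, ?_⟩
    · simpa using hpx.trans hεr
    · have h3 := dist_triangle_right (p + (2 * r) • e) p x
      have h4 : dist (p + (2 * r) • e) p = 2 * r := by
        rw [dist_eq_norm, add_sub_cancel_left, norm_smul, he, mul_one,
          Real.norm_of_nonneg (by linarith)]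
      have h5 := dist_triangle_right (p + (2 * r) • e) p x
      show r ≤ dist (p + (2 * r) • e) x
      nlinarith
  set q := p + t • e with hq
  have hqx : dist q x = r := ht
  have hqa : P q = a := by simp [hq, hPe, hpa]
  have hpS : p ∈ S := ⟨hpa, mem_closedBall.2 (hpx.trans hεr)⟩
  have hqS : q ∈ S := ⟨hqa, mem_closedBall.2 hqx.le⟩
  have hconv : Convex ℝ S :=
    ((convex_singleton a).is_linear_preimage P.isLinear).inter (convex_closedBall x r)
  set g : E → ℝ := fun y => dist y (f x) with hg
  have hgL : LipschitzWith 1 g := LipschitzWith.dist_left _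
  have hpre : IsPreconnected ((fun y => g (f y)) '' S) :=
    hconv.isPreconnected.image _ (by fun_prop)
  have hIcc : Icc s₁ s₂ ⊆ g '' (f '' S) := by
    rw [image_image]
    refine (Icc_subset_Icc (h1 p hpx) (h2 q hqx.ge)).trans ?_
    exact hpre.Icc_subset ⟨p, hpS, rfl⟩ ⟨q, hqS, rfl⟩
  calc ENNReal.ofReal (s₂ - s₁) = μH[1] (Icc s₁ s₂) := by
        rw [hausdorffMeasure_real, Real.volume_Icc]
    _ ≤ μH[1] (g '' (f '' S)) := measure_mono hIcc
    _ ≤ μH[1] (f '' S) := by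
      simpa using hgL.hausdorffMeasure_image_le zero_le_one (f '' S)

theorem density_bound (m : Measure E) [m.IsAddHaarMeasure] (S : Set E) (hS : MeasurableSet S)
    {w : E} (hw : Tendsto (fun r => m (S ∩ closedBall w r) / m (closedBall w r)) (𝓝[>] 0) (𝓝 1))
    {η : ℝ} (hη : 0 < η) :
    ∃ ρ₀ > 0, ∀ ρ, 0 < ρ → ρ < ρ₀ →
      m (closedBall w ρ \ S) ≤ ENNReal.ofReal η * m (closedBall w ρ) := by
  have h0 : 1 - ENNReal.ofReal η < 1 :=
    ENNReal.sub_lt_self (by simp) (by simp) (by simpa using hη)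
  have h1 := hw.eventually (lt_mem_nhds h0)
  rw [eventually_nhdsWithin_iff, Metric.eventually_nhds_iff] at h1
  obtain ⟨ρ₀, hρ₀, h1⟩ := h1
  refine ⟨ρ₀, hρ₀, fun ρ hρ hρ' => ?_⟩
  have h2 := h1 (y := ρ) (by simpa [abs_of_pos hρ] using hρ') hρ
  set B := closedBall w ρ
  have hB0 : m B ≠ 0 := (measure_closedBall_pos _ _ hρ).ne'
  have hB1 : m B ≠ ∞ := measure_closedBall_lt_top.ne
  have h3 : (1 - ENNReal.ofReal η) * m B ≤ m (S ∩ B) :=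
    (ENNReal.le_div_iff_mul_le (Or.inl hB0) (Or.inl hB1)).1 h2.le
  have h4 : m (B ∩ S) + m (B \ S) = m B := measure_inter_add_sdiff B hS
  have h5 : m (B ∩ S) ≠ ∞ := ((measure_mono inter_subset_left).trans_lt hB1.lt_top).ne
  have h6 : m (B ∩ S) + m (B \ S) ≤ m (B ∩ S) + ENNReal.ofReal η * m B := by
    calc _ = 1 * m B := by rw [h4, one_mul]
      _ ≤ ((1 - ENNReal.ofReal η) + ENNReal.ofReal η) * m B := by gcongr; exact le_tsub_add
      _ ≤ _ := by
        rw [add_mul, inter_comm]; gcongr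
  exact (ENNReal.add_le_add_iff_left h5).1 h6

set_option maxHeartbeats 1000000 in
/-- The condition (N) of Lusin. -/
theorem lusin (f : E ≃ₜ E) (m : Measure E) [m.IsAddHaarMeasure] [Nontrivial E]
    (P : E →L[ℝ] F) (hP : ∀ x, ‖P x‖ ≤ ‖x‖) (μ : Measure F) [μ.IsAddHaarMeasure] (d : ℕ)
    (hd : 1 ≤ d)
    (hdE : Module.finrank ℝ E = d + 1) (hdF : Module.finrank ℝ F = d)
    (J : F →L[ℝ] E) (hJ : ∀ b, ‖J b‖ ≤ ‖b‖) (hPJ : ∀ b, P (J b) = b) (e : E) (he : ‖e‖ = 1)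
    (hPe : P e = 0)
    (M : ℝ) (hM : 1 ≤ M) (hW : ∀ x, ∃ δ > 0, WQ f M δ x) (Z : Set E) (hZ : MeasurableSet Z)
    (hZ0 : m Z = 0) : nu f m Z = 0 := by
  have hM0 : 0 < M := by linarith
  have hZU : Z = ⋃ k, Z ∩ good f M k := by
    rw [← inter_iUnion, iUnion_good f M hW, inter_univ]
  rw [hZU, measure_iUnion_null_iff]
  intro k
  rw [nu_apply]
  by_contra hpos
  set S := f '' (Z ∩ good f M k) with hS
  have hSm : MeasurableSet S :=
    f.measurableEmbedding.measurableSet_image.2 (hZ.inter (measurableSet_good f M k))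
  have hne : m.restrict S ≠ 0 := by rwa [Ne, Measure.restrict_eq_zero]
  have : (ae (m.restrict S)).NeBot := ae_neBot.2 hne
  obtain ⟨w, hw, hwS⟩ := ((Besicovitch.ae_tendsto_measure_inter_div m S).and
    (ae_restrict_mem hSm)).exists
  obtain ⟨x, ⟨hxZ, hxk⟩, rfl⟩ := hwS
  obtain ⟨C, hC⟩ := UB.diff_null f m P hP μ d hd hdE hdF M hM hW
  obtain ⟨ε, hε0, hε1, σ, hσ0, hσ1, hcon⟩ := WQ.contract (E := E) M hM
  -- constants
  have hω1 : m (closedBall 0 1) ≠ ∞ := measure_closedBall_lt_top.ne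
  have hμ1 : μ (closedBall 0 1) ≠ ∞ := measure_closedBall_lt_top.ne
  obtain ⟨ω, hω⟩ : ∃ ω, ω = (m (closedBall 0 1)).toReal := ⟨_, rfl⟩
  have hωE : m (closedBall 0 1) = ENNReal.ofReal ω := by rw [hω, ENNReal.ofReal_toReal hω1]
  have hω0 : 0 < ω := by
    rw [hω]; exact ENNReal.toReal_pos (measure_closedBall_pos _ _ one_pos).ne' hω1
  obtain ⟨a, ha⟩ : ∃ a, a = (μ (closedBall 0 1)).toReal := ⟨_, rfl⟩
  have haE : μ (closedBall 0 1) = ENNReal.ofReal a := by rw [ha, ENNReal.ofReal_toReal hμ1]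
  have ha0 : 0 < a := by
    rw [ha]; exact ENNReal.toReal_pos (measure_closedBall_pos _ _ one_pos).ne' hμ1
  set lhs := a * ε ^ d / (2 * M) with hlhs
  have hlhs0 : 0 < lhs := by positivity
  set κ := lhs / (4 * (C * ω + 1)) with hκ
  have hκ0 : 0 < κ := by positivity
  obtain ⟨η, hη0, hη1, hη2⟩ : ∃ η > 0, η * (4 * M) ^ (d+1) ≤ κ ^ (d+1) ∧
      η * (4 * M) ^ (d + 1) < σ ^ (d+1) := by
    refine ⟨min (κ ^ (d+1)) (σ ^ (d+1) / 2) / (4 * M) ^ (d+1), by positivity, ?_, ?_⟩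
    · rw [div_mul_cancel₀ _ (by positivity)]; exact min_le_left _ _
    · rw [div_mul_cancel₀ _ (by positivity)]
      exact (min_le_right _ _).trans_lt (by have : 0 < σ ^ (d+1) := by positivity
                                            linarith)
  obtain ⟨ρ₀, hρ₀, hdens⟩ := density_bound m S hSm hw hη0
  -- choose r
  obtain ⟨ρ₁, hρ₁, hcont⟩ := Metric.continuous_iff.1 f.continuous x (ρ₀ / (4 * M)) (by positivity)
  set δ := 1 / ((k : ℝ) + 1) with hδ
  have hδ0 : 0 < δ := by positivity
  set r := min (ρ₁ / 2) (δ / 2) with hrdef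
  have hr0 : 0 < r := by positivity
  have hr1 : r < ρ₁ := (min_le_left _ _).trans_lt (by linarith)
  have hr2 : r < δ := (min_le_right _ _).trans_lt (by linarith)
  set q := x + r • e with hqdef
  have hq : dist q x = r := by
    rw [hqdef, dist_eq_norm, add_sub_cancel_left, norm_smul, he, mul_one,
      Real.norm_of_nonneg hr0.le]
  obtain ⟨hb1, hb2, hb3⟩ := WQ.round f hM (show WQ f M δ x from hxk) hr2 hq
  have hcon' := hcon f δ x q e r hxk hr0 hr2 hq he
  have hs1 := hcont q (by rw [hq]; exact hr1)
  have hs0 : 0 < dist (f q) (f x) := by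
    rw [dist_pos]
    intro h
    have h' := f.injective h
    rw [h', dist_self] at hq
    linarith
  set s := dist (f q) (f x) with hs
  have hsρ : 4 * M * s < ρ₀ := by
    rw [lt_div_iff₀ (by positivity)] at hs1; linarith
  have hD := hdens (4 * M * s) (by positivity) hsρ
  rw [Measure.addHaar_closedBall' m (f x) (r := 4 * M * s) (by positivity), hdE, hωE] at hD
  have hcontr := hcon' (by
    intro w hw
    by_contra hno
    push Not at hno
    have hsub : ball w (σ * s) ⊆ closedBall (f x) (4 * M * s) \ S := by
      intro v hv
      rw [mem_ball] at hv
      refine ⟨?_, ?_⟩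
      · rw [mem_closedBall] at hw ⊢
        have := dist_triangle v w (f x)
        have h3 : σ * s ≤ M * s := by gcongr; linarith
        linarith
      · rintro ⟨y, ⟨-, hy⟩, rfl⟩
        have := hno y hy
        linarith
    have h3 := (measure_mono hsub).trans hD
    rw [Measure.addHaar_ball m _ (by positivity),
      ← Measure.addHaar_unitClosedBall_eq_addHaar_unitBall, hdE, hωE,
      ← ENNReal.ofReal_mul (by positivity), ← ENNReal.ofReal_mul (by positivity),
      ← ENNReal.ofReal_mul (by positivity), ENNReal.ofReal_le_ofReal_iff (by positivity)] at h3
    rw [mul_pow, mul_pow (4 * M)] at h3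
    have h4 : 0 < s ^ (d+1) * ω := by positivity
    have h5 : σ ^ (d+1) * (s ^ (d+1) * ω) ≤ η * (4 * M) ^ (d+1) * (s ^ (d+1) * ω) := by
      linarith
    have := le_of_mul_le_mul_right h5 h4
    linarith)
  set τ := κ * s / r with hτ
  have hτ0 : 0 < τ := by positivity
  have hfin : nu f m (closedBall x r) ≠ ∞ := (isCompact_closedBall x r).measure_lt_top.ne
  have hmain : ENNReal.ofReal (s / M - s / (2 * M)) * μ (closedBall (P x) (ε * r)) ≤
      C * kap f m d τ (closedBall x r \ Z) := by
    refine ENNReal.le_of_forall_pos_le_add fun ε' hε' _ => ?_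
    exact UB.lower J hJ hPJ e he hPe hr0 hε1
      (hC τ hτ0 (closedBall x r) Z measurableSet_closedBall hZ hZ0 hfin ε' hε') hcontr hb3
  have hk1 : kap f m d τ (closedBall x r \ Z) ≤
      ENNReal.ofReal (τ * (r ^ (d+1) * ω) + τ⁻¹ ^ d * (η * ((4 * M * s) ^ (d+1) * ω))) := by
    simp only [kap, Measure.add_apply, Measure.smul_apply, smul_eq_mul]
    rw [ENNReal.ofReal_add (by positivity) (by positivity), ENNReal.ofReal_mul hτ0.le,
      ENNReal.ofReal_mul (p := τ⁻¹ ^ d) (by positivity)]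
    gcongr
    · refine (measure_mono sdiff_subset).trans ?_
      rw [Measure.addHaar_closedBall' m _ hr0.le, hdE, hωE, ← ENNReal.ofReal_mul (by positivity)]
    · rw [nu_apply, ENNReal.ofReal_mul hη0.le, ENNReal.ofReal_mul (q := ω) (by positivity)]
      refine (measure_mono ?_).trans hD
      rintro _ ⟨y, ⟨hy1, hy2⟩, rfl⟩
      refine ⟨closedBall_subset_closedBall (by nlinarith) (hb1 ⟨y, hy1, rfl⟩), ?_⟩
      rintro ⟨z, ⟨hz, -⟩, hzy⟩
      exact hy2 (f.injective hzy ▸ hz)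
  have h9 := hmain.trans (mul_le_mul_right hk1 _)
  rw [Measure.addHaar_closedBall' μ _ (by positivity), hdF, haE,
    ← ENNReal.ofReal_mul (by positivity), ← ENNReal.ofReal_mul
      (by rw [sub_nonneg]; gcongr; linarith),
    ← ENNReal.ofReal_coe_nnreal, ← ENNReal.ofReal_mul (by positivity),
    ENNReal.ofReal_le_ofReal_iff (by positivity)] at h9
  have e1 : (s / M - s / (2 * M)) * ((ε * r) ^ d * a) = lhs * (s * r ^ d) := by
    rw [hlhs, mul_pow]; field_simp; ring
  have e2 : τ * (r ^ (d+1) * ω) = ω * κ * (s * r ^ d) := by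
    rw [hτ]; field_simp; ring
  have e3 : τ⁻¹ ^ d * (η * ((4 * M * s) ^ (d+1) * ω)) =
      ω * ((η * (4 * M) ^ (d+1)) / κ ^ d) * (s * r ^ d) := by
    rw [hτ, inv_div, div_pow, mul_pow, mul_pow (4 * M)]; field_simp; ring
  rw [e1, e2, e3] at h9
  have h10 : (η * (4 * M) ^ (d+1)) / κ ^ d ≤ κ := by
    rw [div_le_iff₀ (by positivity)]
    calc _ ≤ κ ^ (d+1) := hη1
      _ = _ := by ring
  have h11 : lhs * (s * r ^ d) ≤ (C * (2 * ω * κ)) * (s * r ^ d) := by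
    refine h9.trans ?_
    rw [← add_mul, ← mul_assoc]
    gcongr
    have : ω * ((η * (4 * M) ^ (d+1)) / κ ^ d) ≤ ω * κ := by gcongr
    linarith
  have h12 := le_of_mul_le_mul_right h11 (by positivity)
  have h13 : κ * (4 * (C * ω + 1)) = lhs := by rw [hκ]; field_simp
  have h14 : 0 ≤ (C : ℝ) * ω * κ := by positivity
  nlinarith

end

section
variable {E : Type*} [NormedAddCommGroup E] [NormedSpace ℝ E] [FiniteDimensional ℝ E]
  [MeasurableSpace E] [BorelSpace E]
variable {F : Type*} [NormedAddCommGroup F] [NormedSpace ℝ F] [FiniteDimensional ℝ F]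
  [MeasurableSpace F] [BorelSpace F]

/-- The tube of radius `r` around the fibre over `a`, truncated. -/
def tube (P : E →L[ℝ] F) (R : ℝ) (a : F) (r : ℝ) : Set E :=
  P ⁻¹' closedBall a r ∩ closedBall 0 (R + 1)

/-- The good part of a fibre. -/
def fib (f : E ≃ₜ E) (M : ℝ) (k : ℕ) (P : E →L[ℝ] F) (R : ℝ) (a : F) : Set E :=
  P ⁻¹' {a} ∩ good f M k ∩ closedBall 0 R

theorem sum_cell_le (ν : Measure E) (φ : E →L[ℝ] ℝ) (r : ℝ) (T : Set E) (hT : MeasurableSet T)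
    (i : ℤ) (I : Finset ℤ) : ∑ j ∈ I, ν (T ∩ {y | ⌊φ y / r⌋ = j + i}) ≤ ν T := by
  have hm : ∀ j : ℤ, MeasurableSet (T ∩ {y | ⌊φ y / r⌋ = j + i}) := by
    intro j
    refine hT.inter ?_
    have h1 : Measurable fun y : E => ⌊φ y / r⌋ :=
      Int.measurable_floor.comp (by fun_prop)
    exact h1 (measurableSet_singleton (j + i))
  rw [← measure_biUnion_finset]
  · exact measure_mono (iUnion₂_subset fun _ _ => inter_subset_left)
  · intro j _ l _ hjl
    rw [Function.onFun, disjoint_left]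
    rintro y ⟨-, h1⟩ ⟨-, h2⟩
    simp only [mem_ofPred_eq] at h1 h2
    omega
  · exact fun j _ => hm j

theorem tube_cover (f : E ≃ₜ E) (m : Measure E) [m.IsAddHaarMeasure] [Nontrivial E]
    (P : E →L[ℝ] F) (hP : ∀ x, ‖P x‖ ≤ ‖x‖) (φ : E →L[ℝ] ℝ) (hφ : ∀ x, |φ x| ≤ ‖x‖)
    (hφP : ∀ x, P x = 0 → ‖x‖ = |φ x|) (M : ℝ) (hM : 1 ≤ M) (α β : ℝ) (hα : 0 < α)
    (hαn : α ≤ Module.finrank ℝ E) (hβ : β = Module.finrank ℝ E / α - 1) :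
    ∃ C : ℝ≥0, ∀ (k : ℕ) (R : ℝ) (a : F) (r : ℝ), 0 ≤ R → 0 < r → r ≤ 1 →
      r < 1 / ((k:ℝ) + 1) → ∃ (I : Finset ℤ) (t : ℤ → Set E),
      f '' fib f M k P R a ⊆ ⋃ j ∈ I, t j ∧
      (∑ j ∈ I, ediam (t j) ^ α) ^ ((Module.finrank ℝ E : ℝ) / α) ≤
        ENNReal.ofReal ((2 * R + 5) / r) ^ β * (C * nu f m (tube P R a r)) := by
  classical
  obtain ⟨C, hC⟩ := ediam_pow_le f m M hM
  set n := Module.finrank ℝ E with hn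
  refine ⟨C * 3, fun k R a r hR hr hr1 hrk => ?_⟩
  set D := fib f M k P R a with hD
  set K : ℤ := ⌈R / r⌉₊ + 1 with hK
  set t : ℤ → Set E := fun j => if h : ∃ x ∈ D, ⌊φ x / r⌋ = j then
    f '' closedBall h.choose r else ∅ with ht
  have hRK : R / r + 1 ≤ K := by
    rw [hK]; push_cast; gcongr; exact Nat.le_ceil _
  refine ⟨Finset.Icc (-K) K, t, ?_, ?_⟩
  · rintro _ ⟨x, hx, rfl⟩
    have hex : ∃ y ∈ D, ⌊φ y / r⌋ = ⌊φ x / r⌋ := ⟨x, hx, rfl⟩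
    have hxR : |φ x| ≤ R := (hφ x).trans (by simpa using hx.2)
    have hxr : |φ x / r| ≤ R / r := by
      rw [abs_div, abs_of_pos hr]; gcongr
    rw [abs_le] at hxr
    refine mem_iUnion₂.2 ⟨⌊φ x / r⌋, ?_, ?_⟩
    · rw [Finset.mem_Icc]
      constructor
      · rw [Int.le_floor]; push_cast; linarith
      · have := Int.floor_le (φ x / r)
        have h3 : ((⌊φ x / r⌋ : ℤ) : ℝ) ≤ K := by linarith
        exact_mod_cast h3
    · simp only [ht]
      rw [dif_pos hex]
      refine ⟨x, ?_, rfl⟩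
      have hy := hex.choose_spec
      set y := hex.choose
      have h1 := Int.abs_sub_lt_one_of_floor_eq_floor hy.2.symm
      have h2 : P (x - y) = 0 := by
        rw [map_sub, show P x = a from hx.1.1, show P y = a from hy.1.1.1, sub_self]
      rw [mem_closedBall, dist_eq_norm, hφP _ h2, map_sub]
      rw [← sub_div, abs_div, abs_of_pos hr, div_lt_one hr] at h1
      exact h1.le
  · have hTm : MeasurableSet (tube P R a r) :=
      (P.continuous.measurable measurableSet_closedBall).inter measurableSet_closedBall
    have hcard : ((Finset.Icc (-K) K).card : ℝ≥0∞) ≤ ENNReal.ofReal ((2 * R + 5) / r) := by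
      rw [Int.card_Icc, ← ENNReal.ofReal_natCast]
      refine ENNReal.ofReal_le_ofReal ?_
      have h1 : ((K + 1 - -K).toNat : ℝ) = 2 * ⌈R / r⌉₊ + 3 := by
        have h2 : (K + 1 - -K).toNat = 2 * ⌈R / r⌉₊ + 3 := by omega
        rw [h2]; push_cast; ring
      rw [h1, le_div_iff₀ hr]
      have h3 : (⌈R / r⌉₊ : ℝ) < R / r + 1 := Nat.ceil_lt_add_one (by positivity)
      have h4 : (⌈R / r⌉₊ : ℝ) * r ≤ R + r := by
        calc (⌈R / r⌉₊ : ℝ) * r ≤ (R / r + 1) * r := by gcongr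
          _ = R + r := by field_simp
      nlinarith
    have hone : 1 ≤ (n : ℝ) / α := by rw [le_div_iff₀ hα]; linarith
    have hpt : ∀ j, ediam (t j) ^ n ≤ C * (nu f m (tube P R a r ∩ {y | ⌊φ y / r⌋ = j + (-1)}) +
        nu f m (tube P R a r ∩ {y | ⌊φ y / r⌋ = j + 0}) +
        nu f m (tube P R a r ∩ {y | ⌊φ y / r⌋ = j + 1})) := by
      intro j
      by_cases hex : ∃ y ∈ D, ⌊φ y / r⌋ = j
      · simp only [ht]
        rw [dif_pos hex]
        have hy := hex.choose_spec
        set x := hex.choose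
        refine (hC (1 / ((k:ℝ) + 1)) x r hy.1.1.2 hr hrk).trans ?_
        gcongr
        refine le_trans ?_ ((measure_union_le _ _).trans
          (add_le_add (measure_union_le _ _) le_rfl))
        refine measure_mono fun z hz => ?_
        rw [mem_closedBall, dist_eq_norm] at hz
        have hzT : z ∈ tube P R a r := by
          refine ⟨?_, ?_⟩
          · rw [mem_preimage, mem_closedBall, dist_eq_norm, ← show P x = a from hy.1.1.1, ← map_sub]
            exact (hP _).trans hz
          · have h5 : ‖x‖ ≤ R := by simpa using hy.1.2
            have h6 := norm_sub_norm_le z x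
            rw [mem_closedBall, dist_zero_right]; linarith
        have h7 : |φ z / r - φ x / r| ≤ 1 := by
          rw [← sub_div, abs_div, abs_of_pos hr, div_le_one hr, ← map_sub]
          exact (hφ _).trans hz
        rw [abs_le] at h7
        have h8 : ⌊φ z / r⌋ ≤ j + 1 := by
          rw [← hy.2, ← Int.floor_add_one]; exact Int.floor_le_floor (by linarith)
        have h9 : j - 1 ≤ ⌊φ z / r⌋ := by
          rw [← hy.2, ← Int.floor_sub_one]; exact Int.floor_le_floor (by linarith)
        have h10 : ⌊φ z / r⌋ = j + (-1) ∨ ⌊φ z / r⌋ = j + 0 ∨ ⌊φ z / r⌋ = j + 1 := by omega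
        rcases h10 with h | h | h
        · exact Or.inl (Or.inl ⟨hzT, h⟩)
        · exact Or.inl (Or.inr ⟨hzT, h⟩)
        · exact Or.inr ⟨hzT, h⟩
      · simp only [ht]
        rw [dif_neg hex]
        simp [hn, Module.finrank_pos.ne']
    refine (ENNReal.rpow_sum_le_const_mul_sum_rpow _ _ hone).trans ?_
    rw [← hβ]
    have hβ0 : 0 ≤ β := by rw [hβ]; linarith
    refine mul_le_mul' (ENNReal.rpow_le_rpow hcard hβ0) ?_
    have e1 : ∀ j, (ediam (t j) ^ α) ^ ((n : ℝ) / α) = ediam (t j) ^ n := by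
      intro j
      rw [← ENNReal.rpow_mul, mul_div_cancel₀ _ hα.ne', ENNReal.rpow_natCast]
    simp only [e1]
    refine (Finset.sum_le_sum fun j _ => hpt j).trans ?_
    rw [← Finset.mul_sum, Finset.sum_add_distrib, Finset.sum_add_distrib]
    push_cast
    rw [mul_assoc]
    gcongr
    calc _ ≤ nu f m (tube P R a r) + nu f m (tube P R a r) + nu f m (tube P R a r) := by
          gcongr <;> exact sum_cell_le _ _ _ _ hTm _ _
      _ = _ := by ring

theorem tube_null (f : E ≃ₜ E) (m : Measure E) [m.IsAddHaarMeasure] [Nontrivial E]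
    (P : E →L[ℝ] F) (hP : ∀ x, ‖P x‖ ≤ ‖x‖) (φ : E →L[ℝ] ℝ) (hφ : ∀ x, |φ x| ≤ ‖x‖)
    (hφP : ∀ x, P x = 0 → ‖x‖ = |φ x|) (M : ℝ) (hM : 1 ≤ M) (α β : ℝ) (hα : 0 < α)
    (hαn : α ≤ Module.finrank ℝ E) (hβ : β = Module.finrank ℝ E / α - 1)
    (k : ℕ) (R : ℝ) (hR : 0 ≤ R) (a : F)
    (h : ∀ N : ℕ, ∃ r, 0 < r ∧ r < 1 / ((N:ℝ) + 1) ∧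
      (N + 1 : ℝ≥0∞) * nu f m (tube P R a r) ≤ ENNReal.ofReal r ^ β) :
    μH[α] (f '' fib f M k P R a) = 0 := by
  obtain ⟨C, hC⟩ := tube_cover f m P hP φ hφ hφP M hM α β hα hαn hβ
  set n := Module.finrank ℝ E with hn
  have hn0 : 0 < (n:ℝ) := hα.trans_le hαn
  have hβ0 : 0 ≤ β := by
    rw [hβ, sub_nonneg, le_div_iff₀ hα]; linarith
  set Q : ℝ≥0∞ := ENNReal.ofReal (2 * R + 5) ^ β * C with hQ
  have hQt : Q ≠ ∞ :=
    ENNReal.mul_ne_top (ENNReal.rpow_ne_top_of_nonneg hβ0 ENNReal.ofReal_ne_top) (by simp)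
  set b : ℕ → ℝ≥0∞ := fun j => (Q * ((j:ℝ≥0∞))⁻¹) ^ (α / n) with hb
  have hexp : 0 < α / n := by positivity
  have hblim : Tendsto b atTop (𝓝 0) := by
    have h1 := ENNReal.Tendsto.const_mul (a := Q) ENNReal.tendsto_inv_nat_nhds_zero (Or.inr hQt)
    have h2 := h1.ennrpow_const (α / n)
    rwa [mul_zero, ENNReal.zero_rpow_of_pos hexp] at h2
  have key : ∀ N : ℕ, k ≤ N → ∃ (I : Finset ℤ) (t : ℤ → Set E),
      f '' fib f M k P R a ⊆ ⋃ j ∈ I, t j ∧ ∑ j ∈ I, ediam (t j) ^ α ≤ b N := by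
    intro N hN
    obtain ⟨r, hr0, hrN, hr⟩ := h N
    have hN1 : 1 / ((N:ℝ) + 1) ≤ 1 / ((k:ℝ) + 1) := by gcongr
    have hN2 : 1 / ((N:ℝ) + 1) ≤ 1 := by
      rw [div_le_one (by positivity)]; linarith [(Nat.cast_nonneg N : (0:ℝ) ≤ N)]
    obtain ⟨I, t, h1, h2⟩ := hC k R a r hR hr0 (by linarith) (by linarith)
    refine ⟨I, t, h1, ?_⟩
    have h3 : nu f m (tube P R a r) ≤ ((N:ℝ≥0∞))⁻¹ * ENNReal.ofReal r ^ β := by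
      have h4 : nu f m (tube P R a r) ≤ (N + 1 : ℝ≥0∞)⁻¹ * ENNReal.ofReal r ^ β := by
        rw [mul_comm, ← div_eq_mul_inv,
          ENNReal.le_div_iff_mul_le (Or.inl (by simp)) (Or.inl (by simp)), mul_comm]
        exact hr
      refine h4.trans ?_
      gcongr
      exact le_self_add
    have h5 : (∑ j ∈ I, ediam (t j) ^ α) ^ ((n:ℝ) / α) ≤ Q * ((N:ℝ≥0∞))⁻¹ := by
      refine h2.trans ?_
      have e0 : ENNReal.ofReal ((2 * R + 5) / r) ^ β * ENNReal.ofReal r ^ β =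
          ENNReal.ofReal (2 * R + 5) ^ β := by
        rw [← ENNReal.mul_rpow_of_nonneg _ _ hβ0, ← ENNReal.ofReal_mul (by positivity),
          div_mul_cancel₀ _ hr0.ne']
      calc _ ≤ ENNReal.ofReal ((2 * R + 5) / r) ^ β *
            (C * (((N:ℝ≥0∞))⁻¹ * ENNReal.ofReal r ^ β)) := by gcongr
        _ = (ENNReal.ofReal ((2 * R + 5) / r) ^ β * ENNReal.ofReal r ^ β) * C *
            ((N:ℝ≥0∞))⁻¹ := by ring
        _ = _ := by rw [e0, hQ]
    have h6 := ENNReal.rpow_le_rpow h5 hexp.le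
    rw [← ENNReal.rpow_mul, show (n:ℝ) / α * (α / n) = 1 by field_simp, ENNReal.rpow_one] at h6
    exact h6
  have key' : ∀ N : ℕ, ∃ (I : Finset ℤ) (t : ℤ → Set E), k ≤ N →
      f '' fib f M k P R a ⊆ ⋃ j ∈ I, t j ∧ ∑ j ∈ I, ediam (t j) ^ α ≤ b N := by
    intro N
    by_cases hN : k ≤ N
    · obtain ⟨I, t, h⟩ := key N hN
      exact ⟨I, t, fun _ => h⟩
    · exact ⟨∅, fun _ => ∅, fun h => absurd h hN⟩
  choose I t hIt using key'
  have hd : Tendsto (fun N => b N ^ (1 / α)) atTop (𝓝 0) := by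
    have h2 := hblim.ennrpow_const (1 / α)
    rwa [ENNReal.zero_rpow_of_pos (by positivity)] at h2
  have hfin := Measure.hausdorffMeasure_le_liminf_sum (ι := fun N => I N) α
    (f '' fib f M k P R a) (l := atTop) (fun N => b N ^ (1 / α)) hd
    (fun N j => t N j) ?_ ?_
  · refine le_antisymm (hfin.trans ?_) bot_le
    rw [← hblim.liminf_eq]
    refine liminf_le_liminf ?_
    filter_upwards [eventually_ge_atTop k] with N hN
    rw [Finset.sum_coe_sort (I N) (fun j => ediam (t N j) ^ α)]
    exact (hIt N hN).2
  · filter_upwards [eventually_ge_atTop k] with N hN j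
    have h1 : ediam (t N j) ^ α ≤ b N :=
      (Finset.single_le_sum (f := fun j => ediam (t N j) ^ α) (fun _ _ => bot_le) j.2).trans
        (hIt N hN).2
    rw [one_div, ENNReal.le_rpow_inv_iff hα]
    exact h1
  · filter_upwards [eventually_ge_atTop k] with N hN
    refine (hIt N hN).1.trans ?_
    rw [iUnion_subtype]

end

section
variable {F : Type*} [NormedAddCommGroup F] [NormedSpace ℝ F] [FiniteDimensional ℝ F]
  [MeasurableSpace F] [BorelSpace F]

theorem haus_le_pi (π : Measure F) [IsFiniteMeasure π] (β : ℝ) (hβ : 0 < β) (N : ℕ) (A : Set F)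
    (hA : ∀ a ∈ A, ∀ r, 0 < r → r < 1 / ((N:ℝ) + 1) →
      ENNReal.ofReal r ^ β ≤ (N + 1 : ℝ≥0∞) * π (closedBall a r)) :
    μH[β] A ≤ 2 ^ β * (N + 1 : ℝ≥0∞) * π A := by
  have hstep : ∀ j : ℕ, ∃ (t : Set F) (r : F → ℝ), t.Countable ∧ t ⊆ A ∧
      (∀ x ∈ t, r x ∈ {r | 0 < r ∧ r < 1 / ((N:ℝ) + 1) ∧ r < 1 / ((j:ℝ) + 1)}) ∧
      (A ⊆ ⋃ x ∈ t, closedBall x (r x)) ∧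
      (∑' x : t, π (closedBall x (r x))) ≤ π A + ((j : ℝ≥0∞) + 1)⁻¹ := by
    intro j
    refine Besicovitch.exists_closedBall_covering_tsum_measure_le π (by simp)
      (fun x => {r | 0 < r ∧ r < 1 / ((N:ℝ) + 1) ∧ r < 1 / ((j:ℝ) + 1)}) A ?_
    intro x hx δ hδ
    have h0 : 0 < min δ (min (1 / ((N:ℝ) + 1)) (1 / ((j:ℝ) + 1))) := by positivity
    obtain ⟨r, hr0, hr⟩ := exists_between h0
    simp only [lt_min_iff] at hr
    exact ⟨r, ⟨hr0, hr.2.1, hr.2.2⟩, hr0, hr.1⟩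
  choose t r ht1 ht2 hr ht3 ht4 using hstep
  have hdiam : ∀ (x : F) (s : ℝ), 0 ≤ s → ediam (closedBall x s) ≤ 2 * ENNReal.ofReal s := by
    intro x s hs
    rw [← Metric.closedEBall_ofReal hs]
    exact ediam_closedEBall_le
  have hnat : Tendsto (fun j : ℕ => ((j : ℝ≥0∞) + 1)⁻¹) atTop (𝓝 0) := by
    have := ENNReal.tendsto_inv_nat_nhds_zero.comp (tendsto_add_atTop_nat 1)
    refine this.congr fun j => ?_
    simp
  have hlim0 : Tendsto (fun j : ℕ => 2 * ((j : ℝ≥0∞) + 1)⁻¹) atTop (𝓝 0) := by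
    have := ENNReal.Tendsto.const_mul (a := 2) hnat (Or.inr (by simp))
    rwa [mul_zero] at this
  have : ∀ j, Countable (t j) := fun j => (ht1 j).to_subtype
  have hfin := Measure.hausdorffMeasure_le_liminf_tsum (ι := fun j => t j) β A (l := atTop)
    (fun j : ℕ => 2 * ((j : ℝ≥0∞) + 1)⁻¹) hlim0 (fun j x => closedBall (x : F) (r j x)) ?_ ?_
  · refine hfin.trans ?_
    have hlim : Tendsto (fun j : ℕ => 2 ^ β * (N + 1 : ℝ≥0∞) * (π A + ((j : ℝ≥0∞) + 1)⁻¹)) atTop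
        (𝓝 (2 ^ β * (N + 1 : ℝ≥0∞) * (π A + 0))) := by
      refine ENNReal.Tendsto.const_mul (tendsto_const_nhds.add hnat) (Or.inr ?_)
      exact ENNReal.mul_ne_top (ENNReal.rpow_ne_top_of_nonneg hβ.le (by simp)) (by simp)
    rw [add_zero] at hlim
    rw [← hlim.liminf_eq]
    refine liminf_le_liminf (Eventually.of_forall fun j => ?_)
    calc ∑' x : t j, ediam (closedBall (x : F) (r j x)) ^ β
        ≤ ∑' x : t j, 2 ^ β * (N + 1 : ℝ≥0∞) * π (closedBall x (r j x)) := by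
          refine ENNReal.tsum_le_tsum fun x => ?_
          obtain ⟨h1, h2, -⟩ := hr j x x.2
          calc ediam (closedBall (x : F) (r j x)) ^ β ≤ (2 * ENNReal.ofReal (r j x)) ^ β := by
                gcongr; exact hdiam _ _ h1.le
            _ = 2 ^ β * ENNReal.ofReal (r j x) ^ β := ENNReal.mul_rpow_of_nonneg _ _ hβ.le
            _ ≤ 2 ^ β * ((N + 1 : ℝ≥0∞) * π (closedBall x (r j x))) := by
                gcongr; exact hA x (ht2 j x.2) _ h1 h2
            _ = _ := by ring
      _ = 2 ^ β * (N + 1 : ℝ≥0∞) * ∑' x : t j, π (closedBall x (r j x)) := ENNReal.tsum_mul_left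
      _ ≤ _ := by gcongr; exact ht4 j
  · refine Eventually.of_forall fun j x => ?_
    obtain ⟨h1, -, h2⟩ := hr j x x.2
    refine (hdiam _ _ h1.le).trans ?_
    gcongr
    calc ENNReal.ofReal (r j x) ≤ ENNReal.ofReal (1 / ((j:ℝ) + 1)) := ENNReal.ofReal_le_ofReal h2.le
      _ = ((j : ℝ≥0∞) + 1)⁻¹ := by
        rw [one_div, ENNReal.ofReal_inv_of_pos (by positivity),
          ENNReal.ofReal_add (by positivity) zero_le_one]
        simp
  · refine Eventually.of_forall fun j => (ht3 j).trans ?_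
    rw [iUnion_subtype]

theorem haus_null (π : Measure F) [IsFiniteMeasure π] (β d : ℝ) (hβ : 0 < β) (hβd : β < d)
    (hπ : ∀ S, MeasurableSet S → μH[d] S = 0 → π S = 0) (N : ℕ) (A : Set F)
    (hA : ∀ a ∈ A, ∀ r, 0 < r → r < 1 / ((N:ℝ) + 1) →
      ENNReal.ofReal r ^ β ≤ (N + 1 : ℝ≥0∞) * π (closedBall a r)) :
    μH[β] A = 0 := by
  have h1 := haus_le_pi π β hβ N A hA
  have hfin : μH[β] A ≠ ∞ := by
    refine (h1.trans_lt (ENNReal.mul_lt_top (ENNReal.mul_lt_top ?_ (by simp))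
      (measure_lt_top _ _))).ne
    exact (ENNReal.rpow_ne_top_of_nonneg hβ.le (by simp)).lt_top
  have h2 : μH[d] A = 0 := (Measure.hausdorffMeasure_zero_or_top hβd A).resolve_right hfin
  have h3 : π A = 0 := by
    refine measure_mono_null (subset_toMeasurable μH[d] A) (hπ _ (measurableSet_toMeasurable _ _) ?_)
    rw [measure_toMeasurable, h2]
  rw [h3, mul_zero] at h1
  exact le_antisymm h1 bot_le

variable {E : Type*} [NormedAddCommGroup E] [NormedSpace ℝ E] [FiniteDimensional ℝ E]
  [MeasurableSpace E] [BorelSpace E]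

theorem main (f : E ≃ₜ E) (m : Measure E) [m.IsAddHaarMeasure] [Nontrivial E]
    (P : E →L[ℝ] F) (hP : ∀ x, ‖P x‖ ≤ ‖x‖) (d : ℕ)
    (hd : 1 ≤ d)
    (hdE : Module.finrank ℝ E = d + 1) (hdF : Module.finrank ℝ F = d)
    (J : F →L[ℝ] E) (hJ : ∀ b, ‖J b‖ ≤ ‖b‖) (hPJ : ∀ b, P (J b) = b) (e : E) (he : ‖e‖ = 1)
    (hPe : P e = 0) (φ : E →L[ℝ] ℝ) (hφ : ∀ x, |φ x| ≤ ‖x‖)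
    (hφP : ∀ x, P x = 0 → ‖x‖ = |φ x|)
    (M : ℝ) (hM : 1 ≤ M) (hW : ∀ x, ∃ δ > 0, WQ f M δ x) (α β : ℝ) (hα : 1 < α)
    (hαn : α < Module.finrank ℝ E) (hβ : β = Module.finrank ℝ E / α - 1) :
    μH[β] {a : F | μH[α] (f '' (P ⁻¹' {a})) ≠ 0} = 0 := by
  have hα0 : 0 < α := by linarith
  have hβ0 : 0 < β := by rw [hβ, sub_pos, lt_div_iff₀ hα0]; linarith
  have hβd : β < d := by
    rw [hβ, hdE]
    push_cast
    rw [sub_lt_iff_lt_add, div_lt_iff₀ hα0]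
    have : (0:ℝ) < d + 1 := by positivity
    nlinarith
  have hN0 : ∀ S, MeasurableSet S → μH[(d:ℝ)] S = 0 → nu f m (P ⁻¹' S) = 0 := by
    intro S hS h0
    rw [← hdF] at h0
    refine lusin f m P hP μH[(Module.finrank ℝ F : ℝ)] d hd hdE hdF J hJ hPJ e he hPe M hM hW _
      (P.continuous.measurable hS) ?_
    have hsurj : Function.Surjective P := fun b => ⟨J b, hPJ b⟩
    obtain ⟨c, -, hc⟩ := (P : E →ₗ[ℝ] F).exists_map_addHaar_eq_smul_addHaar m
      μH[(Module.finrank ℝ F : ℝ)] hsurj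
    have h1 := congrArg (fun ρ : Measure F => ρ S) hc
    simp only [Measure.smul_apply, h0, smul_zero] at h1
    rwa [Measure.map_apply (by exact P.continuous.measurable) hS] at h1
  have hπ : ∀ (R : ℕ) (a : F) (r : ℝ), ((nu f m).restrict (closedBall 0 ((R:ℝ) + 1))).map P
      (closedBall a r) = nu f m (tube P R a r) := by
    intro R a r
    rw [Measure.map_apply P.continuous.measurable measurableSet_closedBall,
      Measure.restrict_apply (P.continuous.measurable measurableSet_closedBall)]
    rfl
  have hsub : {a : F | μH[α] (f '' (P ⁻¹' {a})) ≠ 0} ⊆ ⋃ (k : ℕ) (R : ℕ) (N : ℕ),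
      {a | ∀ r, 0 < r → r < 1 / ((N:ℝ) + 1) → ENNReal.ofReal r ^ β ≤ (N + 1 : ℝ≥0∞) *
        ((nu f m).restrict (closedBall 0 ((R:ℝ) + 1))).map P (closedBall a r)} := by
    intro a ha
    by_contra hcon
    apply ha
    have hU : P ⁻¹' {a} = ⋃ (k : ℕ) (R : ℕ), fib f M k P R a := by
      ext x
      simp only [mem_iUnion]
      refine ⟨fun hx => ?_, fun ⟨k, R, hx⟩ => hx.1.1⟩
      obtain ⟨k, hk⟩ := mem_iUnion.1 ((iUnion_good f M hW).symm ▸ mem_univ x)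
      obtain ⟨R, hR⟩ := exists_nat_ge ‖x‖
      exact ⟨k, R, ⟨hx, hk⟩, by simpa using hR⟩
    rw [hU]
    simp only [image_iUnion]
    rw [measure_iUnion_null_iff]
    intro k
    rw [measure_iUnion_null_iff]
    intro R
    refine tube_null f m P hP φ hφ hφP M hM α β hα0 hαn.le hβ k R (by positivity) a ?_
    intro N
    by_contra hno
    apply hcon
    simp only [mem_iUnion]
    refine ⟨k, R, N, fun r hr0 hr1 => ?_⟩
    rw [hπ]
    push Not at hno
    exact (hno r hr0 hr1).le
  refine measure_mono_null hsub ?_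
  rw [measure_iUnion_null_iff]
  intro k
  rw [measure_iUnion_null_iff]
  intro R
  rw [measure_iUnion_null_iff]
  intro N
  have : IsFiniteMeasure ((nu f m).restrict (closedBall 0 ((R:ℝ) + 1))) :=
    ⟨by rw [Measure.restrict_apply_univ]; exact (isCompact_closedBall _ _).measure_lt_top⟩
  refine haus_null (((nu f m).restrict (closedBall 0 ((R:ℝ) + 1))).map P) β d hβ0 hβd ?_ N _
    (fun a ha => ha)
  intro S hS h0
  rw [Measure.map_apply P.continuous.measurable hS]
  exact measure_mono_null subset_rfl (Measure.absolutelyContinuous_of_le Measure.restrict_le_self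
    (hN0 S hS h0))

end

end QCLine

/-- **Balogh–Monti–Tyson (corollary for quasiconformal maps).** If `f : ℝⁿ → ℝⁿ`, `n ≥ 2`,
is a quasiconformal homeomorphism, `L` is a one-dimensional linear subspace of `ℝⁿ`,
`α ∈ (1, n)` and `β = n/α - 1`, then the set of `a ∈ L^⊥` with `H^α(f(a + L)) ≠ 0`
has `H^β`-measure zero. -/
theorem qc_line_distortion
    (n : ℕ) (hn : 2 ≤ n)
    (f : EuclideanSpace ℝ (Fin n) ≃ₜ EuclideanSpace ℝ (Fin n))
    (hf : QuasiconformalOn Set.univ ⇑f)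
    (L : Submodule ℝ (EuclideanSpace ℝ (Fin n))) (hL : Module.finrank ℝ L = 1)
    (α : ℝ) (hα₁ : 1 < α) (hα₂ : α < n)
    (β : ℝ) (hβ : β = (n : ℝ) / α - 1) :
    μH[β] {a : EuclideanSpace ℝ (Fin n) |
      a ∈ Lᗮ ∧ μH[α] (⇑f '' {x | ∃ v ∈ L, x = a + v}) ≠ 0} = 0 := by
  obtain ⟨M, hM, hW⟩ := QCLine.exists_WQ f hf
  have hdE : Module.finrank ℝ (EuclideanSpace ℝ (Fin n)) = (n - 1) + 1 := by
    rw [finrank_euclideanSpace, Fintype.card_fin]; omega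
  have : Nontrivial (EuclideanSpace ℝ (Fin n)) :=
    Module.nontrivial_of_finrank_pos (R := ℝ) (by omega)
  have hdF : Module.finrank ℝ Lᗮ = n - 1 := by
    have := L.finrank_add_finrank_orthogonal
    omega
  obtain ⟨e', he'0, he'⟩ := finrank_eq_one_iff'.1 hL
  have he'n : ‖(e' : EuclideanSpace ℝ (Fin n))‖ ≠ 0 := by
    simpa using he'0
  set e : EuclideanSpace ℝ (Fin n) := ‖(e' : EuclideanSpace ℝ (Fin n))‖⁻¹ • e' with he_def
  have heL : e ∈ L := L.smul_mem _ e'.2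
  have he : ‖e‖ = 1 := by
    rw [he_def, norm_smul, norm_inv, norm_norm, inv_mul_cancel₀ he'n]
  have hspan : ∀ v ∈ L, ∃ c : ℝ, v = c • e := by
    intro v hv
    obtain ⟨c, hc⟩ := he' ⟨v, hv⟩
    refine ⟨c * ‖(e' : EuclideanSpace ℝ (Fin n))‖, ?_⟩
    rw [he_def, smul_smul, mul_assoc, mul_inv_cancel₀ he'n, mul_one]
    exact (congrArg Subtype.val hc).symm
  set P := Lᗮ.orthogonalProjectionOnto with hP
  have hPL : ∀ v, P v = 0 ↔ v ∈ L := by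
    intro v
    rw [hP, Submodule.orthogonalProjectionOnto_eq_zero_iff, Submodule.orthogonal_orthogonal]
  have hPF : ∀ b : Lᗮ, P (b : EuclideanSpace ℝ (Fin n)) = b := fun b =>
    Submodule.orthogonalProjectionOnto_mem_subspace_eq_self b
  have hmain := QCLine.main f volume P (fun x => Lᗮ.norm_orthogonalProjectionOnto_apply_le x) (n - 1)
    (by omega) hdE hdF Lᗮ.subtypeL (fun b => le_rfl) hPF e he ((hPL e).2 heL)
    (innerSL ℝ e) (fun x => by
      simpa [he] using abs_real_inner_le_norm e x)
    (fun x hx => by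
      obtain ⟨c, rfl⟩ := hspan x ((hPL x).1 hx)
      rw [innerSL_apply_apply, inner_smul_right, real_inner_self_eq_norm_sq, he, norm_smul, he]
      simp)
    M hM hW α β hα₁ (by simpa using hα₂) (by simpa using hβ)
  have hβ0 : 0 ≤ β := by
    rw [hβ, sub_nonneg, le_div_iff₀ (by linarith)]; linarith
  have himg := (isometry_subtype_coe (s := (Lᗮ : Set (EuclideanSpace ℝ (Fin n))))).hausdorffMeasure_image
    (d := β) (Or.inl hβ0) {a | μH[α] (⇑f '' (P ⁻¹' {a})) ≠ 0}
  refine measure_mono_null ?_ (himg.trans hmain)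
  rintro a ⟨ha, h⟩
  refine ⟨⟨a, ha⟩, ?_, rfl⟩
  have hset : {x | ∃ v ∈ L, x = a + v} = P ⁻¹' {⟨a, ha⟩} := by
    ext x
    simp only [mem_preimage, mem_singleton_iff]
    constructor
    · rintro ⟨v, hv, rfl⟩
      rw [map_add, (hPL v).2 hv, add_zero]
      exact hPF ⟨a, ha⟩
    · intro hx
      refine ⟨x - a, (hPL _).1 ?_, by abel⟩
      rw [map_sub, hx, sub_eq_zero]
      exact (hPF ⟨a, ha⟩).symm
  rw [hset] at h
  exact h
end
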